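/- Let N ≥ 20 and let D = [d(i,j,k,ℓ)] ∈ R^{N×N×N×N} be a fixed nonzero degenerate tensor. With B, ξ, V as defined (B := max_{σ∈S_N} ‖ [ d(i,j,σ(i),σ(j)) ]_{i,j∈[N]} ‖_op; ξ(i,k) := d(i,i,k,k) − (1/N) Σ_{k'} d(i,i,k',k') − (1/N) Σ_{i'} d(i',i',k,k) + (1/N²) Σ_{i',k'} d(i',i',k',k'); V := (1/N) Σ_{i,k} ξ(i,k)² + (1/N²) Σ_{i,j,k,ℓ} d(i,j,k,ℓ)²), and Q_d := Σ_{i,j∈[N]} d(i,j,π(i),π(j)), the following tail bound holds for every t > 0: P( Q_d − E[Q_d] ≥ t ) ≤ exp( − t² / ( 400000 V + 10800 B t ) ). -/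

import Mathlib

open scoped BigOperators Classical

/-- Spectral (operator) norm of a real matrix. -/
noncomputable def opNorm {m n : ℕ} (M : Matrix (Fin m) (Fin n) ℝ) : ℝ :=
  ‖LinearMap.toContinuousLinearMap (Matrix.toEuclideanLin M)‖

/-- Expectation of `f` under the uniform distribution on `S_N`. -/
noncomputable def permExp (N : ℕ) (f : Equiv.Perm (Fin N) → ℝ) : ℝ :=
  (∑ σ : Equiv.Perm (Fin N), f σ) / (Nat.factorial N : ℝ)

/-- Probability of an event under the uniform distribution on `S_N`. -/
noncomputable def permProb (N : ℕ) (p : Equiv.Perm (Fin N) → Prop) : ℝ :=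
  ((Finset.univ.filter p).card : ℝ) / (Nat.factorial N : ℝ)

noncomputable def av {Ω : Type*} [Fintype Ω] (f : Ω → ℝ) : ℝ := (∑ ω, f ω) / (Fintype.card Ω : ℝ)

section avg
variable {Ω : Type*} [Fintype Ω]

lemma av_add (f g : Ω → ℝ) : av (fun ω => f ω + g ω) = av f + av g := by
  simp [av, Finset.sum_add_distrib, add_div]

lemma av_sub (f g : Ω → ℝ) : av (fun ω => f ω - g ω) = av f - av g := by
  simp [av, Finset.sum_sub_distrib, sub_div]

lemma av_mul_left (c : ℝ) (f : Ω → ℝ) : av (fun ω => c * f ω) = c * av f := by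
  simp [av, ← Finset.mul_sum, mul_div_assoc]

lemma av_mul_right (c : ℝ) (f : Ω → ℝ) : av (fun ω => f ω * c) = av f * c := by
  simp [av, ← Finset.sum_mul, div_mul_eq_mul_div]

lemma av_const [Nonempty Ω] (c : ℝ) : av (fun _ : Ω => c) = c := by
  have : (Fintype.card Ω : ℝ) ≠ 0 := by exact_mod_cast Fintype.card_ne_zero
  simp [av]

lemma av_mono {f g : Ω → ℝ} (h : ∀ ω, f ω ≤ g ω) : av f ≤ av g := by
  unfold av; gcongr; exact h _

lemma av_nonneg {f : Ω → ℝ} (h : ∀ ω, 0 ≤ f ω) : 0 ≤ av f := by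
  unfold av; exact div_nonneg (Finset.sum_nonneg fun i _ => h i) (by positivity)

lemma av_pos [Nonempty Ω] {f : Ω → ℝ} (h : ∀ ω, 0 < f ω) : 0 < av f := by
  unfold av
  exact div_pos (Finset.sum_pos (fun i _ => h i) Finset.univ_nonempty)
    (by exact_mod_cast Fintype.card_pos)

lemma av_equiv {Ω' : Type*} [Fintype Ω'] (e : Ω' ≃ Ω) (f : Ω → ℝ) : av (fun ω => f (e ω)) = av f := by
  unfold av; rw [Equiv.sum_comp e, Fintype.card_congr e]

lemma av_sum {ι : Type*} (s : Finset ι) (f : ι → Ω → ℝ) :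
    av (fun ω => ∑ i ∈ s, f i ω) = ∑ i ∈ s, av (f i) := by
  unfold av; rw [Finset.sum_comm, Finset.sum_div]

lemma av_prod {Ω' : Type*} [Fintype Ω'] (f : Ω × Ω' → ℝ) :
    av f = av (fun a => av (fun b => f (a, b))) := by
  unfold av; rw [Fintype.sum_prod_type, ← Finset.sum_div, Fintype.card_prod, div_div]; push_cast
  rw [mul_comm]

lemma av_comm {Ω' : Type*} [Fintype Ω'] (f : Ω → Ω' → ℝ) :
    av (fun a => av (fun b => f a b)) = av (fun b => av (fun a => f a b)) := by
  unfold av; rw [← Finset.sum_div, ← Finset.sum_div, Finset.sum_comm, div_div, div_div, mul_comm]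

/-- Jensen for exp. -/
lemma exp_av_le [Nonempty Ω] (f : Ω → ℝ) : Real.exp (av f) ≤ av (fun ω => Real.exp (f ω)) := by
  have h : ∀ ω, Real.exp (av f) * (f ω - av f + 1) ≤ Real.exp (f ω) := by
    intro ω
    have := Real.add_one_le_exp (f ω - av f)
    calc _ ≤ Real.exp (av f) * Real.exp (f ω - av f) := by gcongr
      _ = _ := by rw [← Real.exp_add]; ring_nf
  have := av_mono h
  rw [av_mul_left, av_add, av_sub, av_const, av_const] at this
  linarith

lemma av_log_le [Nonempty Ω] {f : Ω → ℝ} (h : ∀ ω, 0 < f ω) :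
    av (fun ω => Real.log (f ω)) ≤ Real.log (av f) := by
  rw [Real.le_log_iff_exp_le (av_pos h)]
  refine (exp_av_le _).trans (le_of_eq ?_)
  congr 1; ext ω; exact Real.exp_log (h ω)

noncomputable def ent (F : Ω → ℝ) : ℝ :=
  av (fun ω => F ω * Real.log (F ω)) - av F * Real.log (av F)

noncomputable def Phi (a b : ℝ) : ℝ := (a - b) * (Real.log a - Real.log b)

lemma Phi_nonneg {a b : ℝ} (ha : 0 < a) (hb : 0 < b) : 0 ≤ Phi a b := by
  unfold Phi
  rcases le_total a b with h | h
  · have := Real.log_le_log ha h; nlinarith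
  · have := Real.log_le_log hb h; nlinarith

lemma logsum [Nonempty Ω] {a b : Ω → ℝ} (ha : ∀ ω, 0 < a ω) (hb : ∀ ω, 0 < b ω) :
    av a * (Real.log (av a) - Real.log (av b)) ≤
      av (fun ω => a ω * (Real.log (a ω) - Real.log (b ω))) := by
  have hA := av_pos ha
  have hB := av_pos hb
  have h : ∀ ω, a ω * (Real.log (av a) - Real.log (av b) + 1) - b ω * (av a / av b) ≤
      a ω * (Real.log (a ω) - Real.log (b ω)) := by
    intro ω
    have h1 := ha ω
    have h2 := hb ω
    have := Real.log_le_sub_one_of_pos (show 0 < b ω * av a / (a ω * av b) by positivity)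
    rw [Real.log_div (by positivity) (by positivity), Real.log_mul h2.ne' hA.ne',
      Real.log_mul h1.ne' hB.ne'] at this
    have h3 := mul_le_mul_of_nonneg_left this h1.le
    have h4 : a ω * (b ω * av a / (a ω * av b) - 1) = b ω * (av a / av b) - a ω := by
      field_simp
    rw [h4] at h3
    linarith
  have := av_mono h
  rw [av_sub, av_mul_right, av_mul_right] at this
  have h5 : av b * (av a / av b) = av a := by field_simp
  linarith

lemma Phi_av [Nonempty Ω] {a b : Ω → ℝ} (ha : ∀ ω, 0 < a ω) (hb : ∀ ω, 0 < b ω) :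
    Phi (av a) (av b) ≤ av (fun ω => Phi (a ω) (b ω)) := by
  have h1 := logsum ha hb
  have h2 := logsum hb ha
  have h3 : av (fun ω => Phi (a ω) (b ω)) = av (fun ω => a ω * (Real.log (a ω) - Real.log (b ω)))
      + av (fun ω => b ω * (Real.log (b ω) - Real.log (a ω))) := by
    rw [← av_add]; congr 1; ext ω; unfold Phi; ring
  rw [h3]; unfold Phi; linarith

lemma ent_le_Phi [Nonempty Ω] {F : Ω → ℝ} (h : ∀ ω, 0 < F ω) :
    ent F ≤ av (fun ω => av (fun ω' => Phi (F ω) (F ω'))) / 2 := by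
  have h1 : av (fun ω => av (fun ω' => Phi (F ω) (F ω'))) =
      2 * (av (fun ω => F ω * Real.log (F ω)) - av F * av (fun ω => Real.log (F ω))) := by
    have : ∀ ω, av (fun ω' => Phi (F ω) (F ω')) = F ω * Real.log (F ω) -
        F ω * av (fun ω => Real.log (F ω)) - av F * Real.log (F ω) +
        av (fun ω => F ω * Real.log (F ω)) := by
      intro ω
      rw [← av_mul_left, ← av_mul_right, ← av_const (Ω := Ω) (F ω * Real.log (F ω)), ← av_sub,
        ← av_sub, ← av_add]
      congr 1; ext ω'; unfold Phi; ring
    simp_rw [this]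
    rw [av_add, av_sub, av_sub, av_const, av_mul_left, av_mul_right]
    ring
  rw [h1]
  have := mul_le_mul_of_nonneg_left (av_log_le h) (av_pos h).le
  unfold ent; linarith

lemma ent_equiv {Ω' : Type*} [Fintype Ω'] (e : Ω' ≃ Ω) (F : Ω → ℝ) :
    ent (fun ω => F (e ω)) = ent F := by
  unfold ent
  rw [av_equiv e F, av_equiv e (fun ω => F ω * Real.log (F ω))]

end avg

section mlsi
open Equiv

lemma av_decomp {n : ℕ} (f : Perm (Fin (n+1)) → ℝ) :
    av f = av (fun p : Fin (n+1) => av (fun e : Perm (Fin n) => f (Perm.decomposeFin.symm (p, e)))) := by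
  rw [← av_equiv Perm.decomposeFin.symm f, av_prod]

lemma fiber_sum {n : ℕ} (f : Perm (Fin (n+1)) → ℝ) (p : Fin (n+1)) :
    ∑ e : Perm (Fin n), f (Perm.decomposeFin.symm (p, e)) = ∑ π, if π 0 = p then f π else 0 := by
  rw [← Equiv.sum_comp Perm.decomposeFin.symm (fun π => if π 0 = p then f π else 0),
    Fintype.sum_prod_type]
  rw [Finset.sum_eq_single p]
  · simp
  · intro q _ hq; simp [hq]
  · simp

lemma fiber_swap {n : ℕ} (f : Perm (Fin (n+1)) → ℝ) (p q : Fin (n+1)) :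
    av (fun e : Perm (Fin n) => f (Perm.decomposeFin.symm (q, e))) =
    av (fun e : Perm (Fin n) => f (swap p q * Perm.decomposeFin.symm (p, e))) := by
  unfold av
  rw [fiber_sum, fiber_sum (fun π => f (swap p q * π))]
  congr 1
  rw [← Equiv.sum_comp (Equiv.mulLeft (swap p q))]
  apply Finset.sum_congr rfl
  intro π _
  have : (swap p q) (π 0) = q ↔ π 0 = p := by
    rw [← Equiv.eq_symm_apply]; simp
  simp [this]

lemma onestep {n : ℕ} (IH : ∀ F : Perm (Fin n) → ℝ, (∀ π, 0 < F π) →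
      ent F ≤ (∑ I, ∑ J, av (fun π => Phi (F π) (F (π * swap I J)))) / (2 * n))
    (F : Perm (Fin (n+1)) → ℝ) (hF : ∀ π, 0 < F π) :
    ent F ≤ (∑ I : Fin n, ∑ J : Fin n, av (fun π => Phi (F π) (F (π * swap I.succ J.succ)))) / (2 * n)
      + (∑ J, av (fun π => Phi (F π) (F (π * swap 0 J)))) / (2 * (n+1)) := by
  set G : Fin (n+1) → ℝ := fun p => av (fun e : Perm (Fin n) => F (Perm.decomposeFin.symm (p, e))) with hG
  have hGpos : ∀ p, 0 < G p := fun p => av_pos fun e => hF _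
  have h1 : ent F = av (fun p => ent (fun e : Perm (Fin n) => F (Perm.decomposeFin.symm (p, e)))) + ent G := by
    have h : ∀ p, ent (fun e : Perm (Fin n) => F (Perm.decomposeFin.symm (p, e))) =
      av (fun e : Perm (Fin n) => F (Perm.decomposeFin.symm (p, e)) * Real.log (F (Perm.decomposeFin.symm (p, e))))
        - G p * Real.log (G p) := fun p => rfl
    simp_rw [h]
    rw [av_sub]
    unfold ent
    rw [av_decomp (fun π => F π * Real.log (F π)), av_decomp F]
    ring
  rw [h1]
  gcongr
  · have h2 : ∀ p, ent (fun e : Perm (Fin n) => F (Perm.decomposeFin.symm (p, e))) ≤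
      (∑ I : Fin n, ∑ J : Fin n, av (fun e : Perm (Fin n) => Phi (F (Perm.decomposeFin.symm (p, e)))
        (F (Perm.decomposeFin.symm (p, e) * swap I.succ J.succ)))) / (2 * n) := by
      intro p
      refine (IH _ (fun e => hF _)).trans (le_of_eq ?_)
      congr 1
      refine Finset.sum_congr rfl fun I _ => Finset.sum_congr rfl fun J _ => ?_
      congr 1; ext e; congr 2
      ext x
      refine Fin.cases ?_ (fun y => ?_) x
      · have : swap I.succ J.succ (0 : Fin (n+1)) = 0 := by
          apply swap_apply_of_ne_of_ne <;> exact (Fin.succ_ne_zero _).symm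
        simp [this]
      · have : swap I.succ J.succ y.succ = (swap I J y).succ := by
          simp only [swap_apply_def, Fin.succ_inj]; split_ifs <;> rfl
        simp [this]
    refine (av_mono h2).trans (le_of_eq ?_)
    simp_rw [div_eq_mul_inv _ (2 * (n:ℝ))]
    rw [av_mul_right]
    congr 1
    rw [av_sum]
    refine Finset.sum_congr rfl fun I _ => ?_
    rw [av_sum]
    refine Finset.sum_congr rfl fun J _ => ?_
    rw [av_decomp]
  · refine (ent_le_Phi hGpos).trans ?_
    have h3 : ∀ p q, Phi (G p) (G q) ≤ av (fun e : Perm (Fin n) => Phi (F (Perm.decomposeFin.symm (p, e)))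
        (F (swap p q * Perm.decomposeFin.symm (p, e)))) := by
      intro p q
      have := Phi_av (a := fun e : Perm (Fin n) => F (Perm.decomposeFin.symm (p, e)))
        (b := fun e => F (swap p q * Perm.decomposeFin.symm (p, e))) (fun _ => hF _) (fun _ => hF _)
      rw [← fiber_swap] at this
      exact this
    have h4 : av (fun p => av (fun q => Phi (G p) (G q))) ≤
        av (fun p => (∑ q, av (fun e : Perm (Fin n) => Phi (F (Perm.decomposeFin.symm (p, e)))
        (F (swap p q * Perm.decomposeFin.symm (p, e))))) / ((n:ℝ)+1)) := by
      apply av_mono; intro p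
      conv_lhs => unfold av
      simp only [Fintype.card_fin]; push_cast
      gcongr
      exact h3 _ _
    have h5 : av (fun p => (∑ q, av (fun e : Perm (Fin n) => Phi (F (Perm.decomposeFin.symm (p, e)))
        (F (swap p q * Perm.decomposeFin.symm (p, e))))) / ((n:ℝ)+1)) =
        (∑ J, av (fun π => Phi (F π) (F (π * swap 0 J)))) / ((n:ℝ)+1) := by
      simp_rw [div_eq_mul_inv _ ((n:ℝ)+1)]
      rw [av_mul_right]
      congr 1
      rw [← av_sum, av_decomp]
      congr 1; ext p
      rw [← av_sum]
      congr 1; ext e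
      set π := Perm.decomposeFin.symm (p, e) with hπ
      have hp : π 0 = p := by simp [hπ]
      rw [← Equiv.sum_comp π (fun q => Phi (F π) (F (swap p q * π)))]
      refine Finset.sum_congr rfl fun J _ => ?_
      congr 2
      rw [← hp, Equiv.swap_apply_apply]; simp
    rw [h5] at h4
    calc _ ≤ (∑ J, av (fun π => Phi (F π) (F (π * swap 0 J)))) / ((n:ℝ)+1) / 2 := by gcongr
      _ = _ := by rw [div_div]; ring_nf

lemma sum_succ_ne {n : ℕ} (u : Fin (n+1) → Fin (n+1) → ℝ) :
    ∑ I : Fin n, ∑ J : Fin n, u I.succ J.succ = ∑ I, ∑ J, u I J - ∑ J, u 0 J - ∑ I, u I 0 + u 0 0 := by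
  simp only [Fin.sum_univ_succ, Finset.sum_add_distrib]
  ring

theorem mlsi : ∀ (n : ℕ) (F : Perm (Fin n) → ℝ), (∀ π, 0 < F π) →
      ent F ≤ (∑ I, ∑ J, av (fun π => Phi (F π) (F (π * swap I J)))) / (2 * n) := by
  have hsub : ∀ n : ℕ, n ≤ 1 → ∀ (F : Perm (Fin n) → ℝ), ent F = 0 := by
    intro n hn F
    have : Subsingleton (Fin n) := Fin.subsingleton_iff_le_one.2 hn
    have h : ∀ f : Perm (Fin n) → ℝ, av f = f 1 := by
      intro f
      rw [show f = fun _ => f 1 from funext fun π => congrArg f (Subsingleton.elim _ _), av_const]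
    unfold ent; rw [h, h]; ring
  have hS : ∀ (n : ℕ) (F : Perm (Fin n) → ℝ), (∀ π, 0 < F π) →
      0 ≤ (∑ I, ∑ J, av (fun π => Phi (F π) (F (π * swap I J)))) := by
    intro n F hF
    exact Finset.sum_nonneg fun I _ => Finset.sum_nonneg fun J _ =>
      av_nonneg fun π => Phi_nonneg (hF _) (hF _)
  intro n
  induction n with
  | zero => intro F hF; rw [hsub 0 (by norm_num)]; simp
  | succ n IH =>
    intro F hF
    rcases Nat.eq_zero_or_pos n with rfl | hn
    · rw [hsub _ (by norm_num)]
      exact div_nonneg (hS _ F hF) (by positivity)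
    set u : Fin (n+1) → Fin (n+1) → ℝ := fun I J => av (fun π => Phi (F π) (F (π * swap I J))) with hu
    set S := ∑ I, ∑ J, u I J with hSdef
    have hsymm : ∀ I J, u I J = u J I := by intro I J; simp only [hu, swap_comm]
    have hdiag : ∀ I, u I I = 0 := by
      intro I
      have h1 : swap I I = 1 := swap_self I
      simp only [hu, h1, mul_one, Phi, sub_self, zero_mul]
      simp [av]
    have key : ∀ i, ent F ≤ (S - 2 * ∑ J, u i J) / (2 * n) + (∑ J, u i J) / (2 * (n+1)) := by
      intro i
      have h := onestep IH (fun π => F (π * swap 0 i)) (fun _ => hF _)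
      have he : ent (fun π => F (π * swap 0 i)) = ent F := ent_equiv (Equiv.mulRight (swap 0 i)) F
      rw [he] at h
      have hv : ∀ I J, av (fun π => Phi (F (π * swap 0 i)) (F (π * swap I J * swap 0 i))) =
          u (swap 0 i I) (swap 0 i J) := by
        intro I J
        simp only [hu]
        rw [← av_equiv (Equiv.mulRight (swap 0 i)) (fun π => Phi (F π) (F (π * swap (swap 0 i I) (swap 0 i J))))]
        congr 1; ext π
        simp only [Equiv.coe_mulRight]
        rw [Equiv.swap_apply_apply]; simp [mul_assoc]
      simp_rw [hv] at h
      rw [sum_succ_ne (fun I J => u (swap 0 i I) (swap 0 i J))] at h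
      rw [Equiv.sum_comp (swap 0 i) (fun I => ∑ J, u I (swap 0 i J))] at h
      have hc : ∀ I, ∑ J, u I (swap 0 i J) = ∑ J, u I J := fun I => Equiv.sum_comp (swap 0 i) (fun J => u I J)
      simp only [hc] at h
      rw [Equiv.sum_comp (swap 0 i) (fun J => u J (swap 0 i 0))] at h
      simp only [swap_apply_left, hdiag] at h
      refine h.trans (le_of_eq ?_)
      rw [Finset.sum_congr rfl fun J _ => hsymm J i]
      congr 2; ring
    have hsum := Finset.sum_le_sum (s := Finset.univ) fun i _ => key i
    simp only [Finset.sum_const, Finset.card_univ, Fintype.card_fin, nsmul_eq_mul, Finset.sum_add_distrib,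
      ← Finset.sum_div, Finset.sum_sub_distrib, ← Finset.mul_sum] at hsum
    push_cast at hsum ⊢
    have hS0 : 0 ≤ S := hS _ F hF
    have hn' : (0:ℝ) < n := by exact_mod_cast hn
    rw [← hSdef] at hsum
    rw [le_div_iff₀ (by positivity)]
    have e1 : (((n:ℝ)+1) * S - 2 * S) / (2 * n) + S / (2 * (n + 1)) ≤ S / 2 := by
      rw [div_add_div _ _ (by positivity) (by positivity), div_le_div_iff₀ (by positivity) (by positivity)]
      nlinarith
    nlinarith
end mlsi

lemma ode_bound (L L' P P' : ℝ → ℝ) (hL : ∀ x, HasDerivAt L (L' x) x) (hL0 : L 0 = 0)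
    (hP : ∀ x, HasDerivAt P (P' x) x) (hP0 : P 0 = 0) (T : ℝ)
    (h : ∀ x, 0 < x → x < T → x * L' x - L x ≤ x ^ 2 * P' x) (hT : 0 < T) :
    L T ≤ T * (L' 0 + P T) := by
  have hanti : AntitoneOn (fun x => L x / x - P x) (Set.Ioc 0 T) := by
    have hd : ∀ x, 0 < x → HasDerivAt (fun x => L x / x - P x) ((L' x * x - L x * 1) / x ^ 2 - P' x) x := by
      intro x hx
      exact ((hL x).div (hasDerivAt_id x) hx.ne').sub (hP x)
    apply antitoneOn_of_deriv_nonpos (convex_Ioc 0 T)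
    · intro x hx
      exact (hd x hx.1).continuousAt.continuousWithinAt
    · intro x hx
      rw [interior_Ioc] at hx
      exact (hd x hx.1).differentiableAt.differentiableWithinAt
    · intro x hx
      rw [interior_Ioc] at hx
      rw [(hd x hx.1).deriv, sub_nonpos, div_le_iff₀ (pow_pos hx.1 2)]
      have := h x hx.1 hx.2
      linarith
  have hlim : Filter.Tendsto (fun x => L x / x - P x) (nhdsWithin 0 (Set.Ioi 0)) (nhds (L' 0 - 0)) := by
    apply Filter.Tendsto.sub
    · have := (hasDerivAt_iff_tendsto_slope.1 (hL 0))
      have h2 := this.mono_left (nhdsWithin_mono 0 (s := Set.Ioi 0) (fun x (hx : 0 < x) => by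
        simpa using hx.ne'))
      refine h2.congr fun x => ?_
      simp [slope, hL0, div_eq_inv_mul]
    · have := (hP 0).continuousAt.tendsto
      rw [hP0] at this
      exact this.mono_left nhdsWithin_le_nhds
  have : L T / T - P T ≤ L' 0 - 0 := by
    refine ge_of_tendsto hlim ?_
    filter_upwards [Ioc_mem_nhdsGT hT] with x hx
    exact hanti hx ⟨hT, le_rfl⟩ hx.2
  have h3 : L T / T ≤ L' 0 + P T := by linarith
  rw [div_le_iff₀ hT] at h3
  linarith

section herbst
variable {Ω : Type*} [Fintype Ω] [Nonempty Ω]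

noncomputable def mgf' (f : Ω → ℝ) (x : ℝ) : ℝ := av (fun ω => Real.exp (x * f ω))

lemma mgf'_pos (f : Ω → ℝ) (x : ℝ) : 0 < mgf' f x := av_pos fun _ => Real.exp_pos _

lemma mgf'_zero (f : Ω → ℝ) : mgf' f 0 = 1 := by simp [mgf', av_const]

lemma logmgf_deriv (f : Ω → ℝ) (x : ℝ) : HasDerivAt (fun x => Real.log (mgf' f x))
    (av (fun ω => f ω * Real.exp (x * f ω)) / mgf' f x) x := by
  apply HasDerivAt.log _ (mgf'_pos f x).ne'
  unfold mgf' av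
  apply HasDerivAt.div_const
  apply HasDerivAt.fun_sum
  intro ω _
  have := ((hasDerivAt_id x).mul_const (f ω)).exp
  simp only [id, one_mul] at this
  rw [mul_comm]; exact this

lemma ent_exp (f : Ω → ℝ) (x : ℝ) : ent (fun ω => Real.exp (x * f ω)) =
    x * av (fun ω => f ω * Real.exp (x * f ω)) - mgf' f x * Real.log (mgf' f x) := by
  unfold ent
  rw [← av_mul_left]
  congr 2
  ext ω; rw [Real.log_exp]; ring

lemma herbst (f : Ω → ℝ) (P P' : ℝ → ℝ)
    (hP : ∀ x, HasDerivAt P (P' x) x) (hP0 : P 0 = 0) (T : ℝ) (hT : 0 < T)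
    (h : ∀ x, 0 < x → x < T → ent (fun ω => Real.exp (x * f ω)) ≤ x ^ 2 * P' x * mgf' f x) :
    Real.log (mgf' f T) ≤ T * (av f + P T) := by
  have := ode_bound (fun x => Real.log (mgf' f x)) _ P P' (logmgf_deriv f) (by simp [mgf'_zero]) hP hP0 T ?_ hT
  · simpa [mgf'_zero] using this
  · intro x hx hxT
    have h1 := h x hx hxT
    rw [ent_exp] at h1
    have hm := mgf'_pos f x
    have : x * (av (fun ω => f ω * Real.exp (x * f ω)) / mgf' f x) - Real.log (mgf' f x) =
       (x * av (fun ω => f ω * Real.exp (x * f ω)) - mgf' f x * Real.log (mgf' f x)) / mgf' f x := by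
      field_simp
    rw [this, div_le_iff₀ hm]
    exact h1

lemma gibbs (F w : Ω → ℝ) (hF : ∀ ω, 0 < F ω) :
    av (fun ω => w ω * F ω) ≤ ent F + av F * Real.log (av (fun ω => Real.exp (w ω))) := by
  have := logsum hF (b := fun ω => Real.exp (w ω)) (fun _ => Real.exp_pos _)
  simp only [Real.log_exp, mul_sub, av_sub] at this
  unfold ent
  have h : av (fun ω => F ω * w ω) = av (fun ω => w ω * F ω) := by simp_rw [mul_comm]
  linarith

/-- self-bounding -/
lemma selfbound (f : Ω → ℝ) (hf : ∀ ω, 0 ≤ f ω) (c T : ℝ) (hc : 0 ≤ c) (hT : 0 < T) (hcT : c * T ≤ 1 / 10)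
    (h : ∀ x, 0 < x → x < T → ent (fun ω => Real.exp (x * f ω)) ≤
      x ^ 2 * (c * av (fun ω => f ω * Real.exp (x * f ω)))) :
    av (fun ω => Real.exp (T * f ω)) ≤ Real.exp (10 / 9 * T * av f) := by
  have := herbst f (fun x => c * Real.log (mgf' f x)) _ (fun x => (logmgf_deriv f x).const_mul c)
    (by simp [mgf'_zero]) T hT ?_
  · have hL : 0 ≤ Real.log (mgf' f T) := by
      apply Real.log_nonneg
      rw [← av_const (Ω := Ω) 1]
      apply av_mono; intro ω
      exact Real.one_le_exp (mul_nonneg hT.le (hf ω))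
    have h2 : c * T * Real.log (mgf' f T) ≤ 1 / 10 * Real.log (mgf' f T) := by gcongr
    have h3 : Real.log (mgf' f T) ≤ 10 / 9 * T * av f := by nlinarith
    rwa [Real.log_le_iff_le_exp (mgf'_pos f T)] at h3
  · intro x hx hxT
    refine (h x hx hxT).trans (le_of_eq ?_)
    have hm := mgf'_pos f x
    field_simp

lemma subgauss (f w : Ω → ℝ) (hf : av f = 0) (hw : ∀ ω, 0 ≤ w ω) (r T : ℝ) (hr : 0 < r) (hT : 0 < T)
    (hrT : T ^ 2 ≤ r / 10)
    (h : ∀ x, 0 < x → x < T → ent (fun ω => Real.exp (x * f ω)) ≤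
      x ^ 2 * av (fun ω => w ω * Real.exp (x * f ω))) :
    av (fun ω => Real.exp (T * f ω)) ≤
      Real.exp (10 / 9 * (T ^ 2 / r) * Real.log (av (fun ω => Real.exp (r * w ω)))) := by
  set ψ := Real.log (av (fun ω => Real.exp (r * w ω))) with hψ
  have hψ0 : 0 ≤ ψ := by
    apply Real.log_nonneg
    rw [← av_const (Ω := Ω) 1]
    apply av_mono; intro ω
    exact Real.one_le_exp (mul_nonneg hr.le (hw ω))
  have := herbst f (fun x => x * (10 / 9 * ψ / r)) _ (fun x => (hasDerivAt_id x).mul_const _)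
    (by simp) T hT ?_
  · rw [hf] at this
    have h3 : Real.log (mgf' f T) ≤ 10 / 9 * (T ^ 2 / r) * ψ := by
      refine this.trans (le_of_eq ?_); ring
    rwa [Real.log_le_iff_le_exp (mgf'_pos f T)] at h3
  · intro x hx hxT
    have h1 := h x hx hxT
    have h2 := gibbs (fun ω => Real.exp (x * f ω)) (fun ω => r * w ω) (fun _ => Real.exp_pos _)
    simp only [mul_assoc] at h2
    rw [av_mul_left] at h2
    rw [← hψ] at h2
    change _ ≤ _ + mgf' f x * ψ at h2
    have hm := mgf'_pos f x
    set E := ent (fun ω => Real.exp (x * f ω))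
    set A := av (fun ω => w ω * Real.exp (x * f ω))
    have hx2 : x ^ 2 ≤ r / 10 := le_trans (by gcongr) hrT
    rw [show x ^ 2 * (1 * (10 / 9 * ψ / r)) * mgf' f x = (x ^ 2 * (10 / 9 * (ψ * mgf' f x))) / r by ring,
      le_div_iff₀ hr]
    rcases le_total E 0 with hE | hE
    · have : E * r ≤ 0 := mul_nonpos_of_nonpos_of_nonneg hE hr.le
      have : 0 ≤ x ^ 2 * (10 / 9 * (ψ * mgf' f x)) := by positivity
      linarith
    · have h3 : r * E ≤ x ^ 2 * (E + mgf' f x * ψ) := by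
        calc r * E ≤ r * (x ^ 2 * A) := by gcongr
          _ = x ^ 2 * (r * A) := by ring
          _ ≤ _ := by gcongr
      have h4 : x ^ 2 * E ≤ r / 10 * E := by gcongr
      nlinarith
end herbst

section permherbst
open Equiv
lemma Phi_exp (a b : ℝ) : Phi (Real.exp a) (Real.exp b) ≤
    (max (a - b) 0) ^ 2 * Real.exp a + (max (b - a) 0) ^ 2 * Real.exp b := by
  have key : ∀ a b : ℝ, b ≤ a → (Real.exp a - Real.exp b) * (a - b) ≤ (a - b) ^ 2 * Real.exp a := by
    intro a b hab
    have h1 := Real.add_one_le_exp (b - a)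
    have h2 : Real.exp b = Real.exp a * Real.exp (b - a) := by rw [← Real.exp_add]; ring_nf
    have h3 : Real.exp a - Real.exp b ≤ (a - b) * Real.exp a := by
      rw [h2]; nlinarith [Real.exp_pos a]
    nlinarith
  unfold Phi
  rw [Real.log_exp, Real.log_exp]
  rcases le_total a b with h | h
  · rw [max_eq_right (by linarith : a - b ≤ 0), max_eq_left (by linarith : 0 ≤ b - a)]
    have := key b a h
    linarith
  · rw [max_eq_left (by linarith : 0 ≤ a - b), max_eq_right (by linarith : b - a ≤ 0)]
    have := key a b h
    linarith

lemma ent_perm {n : ℕ} (hn : 0 < n) (f w : Perm (Fin n) → ℝ)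
    (hw : ∀ π, ∑ I, ∑ J, (max (f π - f (π * swap I J)) 0) ^ 2 ≤ n * w π) (x : ℝ) (hx : 0 < x) :
    ent (fun π => Real.exp (x * f π)) ≤ x ^ 2 * av (fun π => w π * Real.exp (x * f π)) := by
  refine (mlsi n _ (fun _ => Real.exp_pos _)).trans ?_
  have hn' : (0:ℝ) < n := by exact_mod_cast hn
  rw [div_le_iff₀ (by positivity)]
  have h1 : ∀ I J, av (fun π => Phi (Real.exp (x * f π)) (Real.exp (x * f (π * swap I J)))) ≤
      2 * (x ^ 2 * av (fun π => (max (f π - f (π * swap I J)) 0) ^ 2 * Real.exp (x * f π))) := by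
    intro I J
    have h2 : av (fun π => (max (f (π * swap I J) - f π) 0) ^ 2 * Real.exp (x * f (π * swap I J))) =
       av (fun π => (max (f π - f (π * swap I J)) 0) ^ 2 * Real.exp (x * f π)) := by
      rw [← av_equiv (Equiv.mulRight (swap I J)) (fun π => (max (f π - f (π * swap I J)) 0) ^ 2 * Real.exp (x * f π))]
      congr 1; ext π
      simp [mul_assoc]
    rw [two_mul]
    nth_rewrite 2 [← h2]
    rw [← av_mul_left, ← av_mul_left, ← av_add]
    apply av_mono
    intro π
    refine (Phi_exp _ _).trans (le_of_eq ?_)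
    have hmax : ∀ a b : ℝ, max (x * a - x * b) 0 = x * max (a - b) 0 := by
      intro a b
      rw [mul_max_of_nonneg _ _ hx.le, mul_sub, mul_zero]
    rw [hmax, hmax]; ring
  refine (Finset.sum_le_sum fun I _ => Finset.sum_le_sum fun J _ => h1 I J).trans ?_
  simp only [← Finset.mul_sum, ← av_sum, ← Finset.sum_mul]
  have h3 : av (fun π => (∑ I, ∑ J, (max (f π - f (π * swap I J)) 0) ^ 2) * Real.exp (x * f π)) ≤
      av (fun π => n * (w π * Real.exp (x * f π))) := by
    apply av_mono; intro π
    rw [← mul_assoc]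
    exact mul_le_mul_of_nonneg_right (hw π) (Real.exp_pos _).le
  rw [av_mul_left] at h3
  nlinarith [sq_nonneg x, mul_le_mul_of_nonneg_left h3 (sq_nonneg x)]

lemma perm_selfbound {n : ℕ} (hn : 0 < n) (f : Perm (Fin n) → ℝ) (hf : ∀ π, 0 ≤ f π) (c T : ℝ)
    (hc : 0 ≤ c) (hT : 0 < T) (hcT : c * T ≤ 1 / 10)
    (hw : ∀ π, ∑ I, ∑ J, (max (f π - f (π * swap I J)) 0) ^ 2 ≤ n * (c * f π)) :
    av (fun ω => Real.exp (T * f ω)) ≤ Real.exp (10 / 9 * T * av f) := by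
  apply selfbound f hf c T hc hT hcT
  intro x hx _
  refine (ent_perm hn f _ hw x hx).trans (le_of_eq ?_)
  simp_rw [mul_assoc, av_mul_left]

lemma perm_subgauss {n : ℕ} (hn : 0 < n) (f w : Perm (Fin n) → ℝ) (hf : av f = 0) (hw0 : ∀ π, 0 ≤ w π)
    (r T : ℝ) (hr : 0 < r) (hT : 0 < T) (hrT : T ^ 2 ≤ r / 10)
    (hw : ∀ π, ∑ I, ∑ J, (max (f π - f (π * swap I J)) 0) ^ 2 ≤ n * w π) :
    av (fun ω => Real.exp (T * f ω)) ≤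
      Real.exp (10 / 9 * (T ^ 2 / r) * Real.log (av (fun ω => Real.exp (r * w ω)))) :=
  subgauss f w hf hw0 r T hr hT hrT fun x hx _ => ent_perm hn f w hw x hx
end permherbst

section linstat
open Equiv
variable {n : ℕ}

noncomputable def lin (x : Fin n → Fin n → ℝ) (α : Perm (Fin n)) : ℝ := ∑ i, x i (α i)

lemma lin_diff (x : Fin n → Fin n → ℝ) (α : Perm (Fin n)) (I J : Fin n) :
    lin x α - lin x (α * swap I J) = x I (α I) + x J (α J) - x I (α J) - x J (α I) := by
  unfold lin
  rw [← Finset.sum_sub_distrib]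
  rcases eq_or_ne I J with rfl | h
  · have h1 : swap I I = 1 := swap_self I
    simp [h1]
  · rw [← Finset.sum_subset (Finset.subset_univ {I, J})]
    · rw [Finset.sum_pair h]; simp; ring
    · intro k _ hk
      simp only [Finset.mem_insert, Finset.mem_singleton, not_or] at hk
      simp [swap_apply_of_ne_of_ne hk.1 hk.2]

lemma av_point (hn : 0 < n) (φ : Fin n → ℝ) (i : Fin n) :
    av (fun α : Perm (Fin n) => φ (α i)) = (∑ k, φ k) / n := by
  have h1 : ∀ i', av (fun α : Perm (Fin n) => φ (α i')) = av (fun α : Perm (Fin n) => φ (α i)) := by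
    intro i'
    rw [← av_equiv (Equiv.mulRight (swap i i')) (fun α : Perm (Fin n) => φ (α i))]
    simp
  have h2 : ∑ i', av (fun α : Perm (Fin n) => φ (α i')) = ∑ k, φ k := by
    rw [← av_sum]
    simp_rw [fun α : Perm (Fin n) => Equiv.sum_comp α φ]
    rw [av_const]
  simp_rw [h1] at h2
  simp only [Finset.sum_const, Finset.card_univ, Fintype.card_fin, nsmul_eq_mul] at h2
  have hn' : (n:ℝ) ≠ 0 := by exact_mod_cast hn.ne'
  rw [← h2]; field_simp

lemma av_lin (hn : 0 < n) (x : Fin n → Fin n → ℝ) : av (lin x) = (∑ i, ∑ k, x i k) / n := by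
  unfold lin
  rw [av_sum, Finset.sum_div]
  exact Finset.sum_congr rfl fun i _ => av_point hn (x i) i

lemma four_sq (a b c d : ℝ) : (a + b - c - d) ^ 2 ≤ 4 * (a ^ 2 + b ^ 2 + c ^ 2 + d ^ 2) := by
  nlinarith [sq_nonneg (a - b), sq_nonneg (a + c), sq_nonneg (a + d), sq_nonneg (b + c), sq_nonneg (b + d),
    sq_nonneg (c - d)]

lemma sum_four (u : Fin n → Fin n → ℝ) (α : Perm (Fin n)) :
    ∑ I, ∑ J, (u I (α I) + u J (α J) - u I (α J) - u J (α I)) ^ 2 ≤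
      8 * (n * ∑ I, u I (α I) ^ 2) + 8 * ∑ I, ∑ k, u I k ^ 2 := by
  calc _ ≤ ∑ I, ∑ J, 4 * (u I (α I) ^ 2 + u J (α J) ^ 2 + u I (α J) ^ 2 + u J (α I) ^ 2) :=
        Finset.sum_le_sum fun I _ => Finset.sum_le_sum fun J _ => four_sq _ _ _ _
    _ = _ := by
      have h1 : ∑ I, ∑ J, u I (α J) ^ 2 = ∑ I, ∑ k, u I k ^ 2 :=
        Finset.sum_congr rfl fun I _ => Equiv.sum_comp α (fun k => u I k ^ 2)
      have h2 : ∑ I, ∑ J, u J (α I) ^ 2 = ∑ I, ∑ k, u I k ^ 2 := by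
        rw [Finset.sum_comm]; exact h1
      simp only [← Finset.mul_sum, Finset.sum_add_distrib, h1, h2]
      simp
      rw [← Finset.mul_sum]
      ring

lemma lin_var (hn : 0 < n) (x : Fin n → Fin n → ℝ) :
    av (fun α => (lin x α - av (lin x)) ^ 2) ≤ 4 / n * ∑ i, ∑ k, x i k ^ 2 := by
  have hn' : (0:ℝ) < n := by exact_mod_cast hn
  set μ := av (lin x) with hμ
  set f : Perm (Fin n) → ℝ := fun α => lin x α - μ with hf
  have h1 : ∀ α, ∑ I, ∑ J, (f α - f (α * swap I J)) = 2 * n * f α := by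
    intro α
    have : ∀ I J, f α - f (α * swap I J) = x I (α I) + x J (α J) - x I (α J) - x J (α I) := by
      intro I J; rw [← lin_diff]; simp only [hf]; ring
    simp_rw [this]
    have e1 : ∑ I, ∑ J, x I (α J) = ∑ I, ∑ k, x I k :=
      Finset.sum_congr rfl fun I _ => Equiv.sum_comp α (fun k => x I k)
    have e2 : ∑ I, ∑ J, x J (α I) = ∑ I, ∑ k, x I k := by
      rw [Finset.sum_comm]; exact e1
    simp only [Finset.sum_add_distrib, Finset.sum_sub_distrib, e1, e2]
    simp [← Finset.mul_sum, hf, lin]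
    have : μ = (∑ i, ∑ k, x i k) / n := av_lin hn x
    rw [this]; field_simp; ring
  have h2 : ∀ I J, av (fun α => (f α - f (α * swap I J)) ^ 2) = 2 * av (fun α => f α * (f α - f (α * swap I J))) := by
    intro I J
    have : av (fun α => f α * (f α - f (α * swap I J))) = av (fun α => f (α * swap I J) * (f (α * swap I J) - f α)) := by
      rw [← av_equiv (Equiv.mulRight (swap I J)) (fun α => f α * (f α - f (α * swap I J)))]
      simp [mul_assoc]
    rw [two_mul]
    nth_rewrite 2 [this]
    rw [← av_add]; congr 1; ext α; ring
  have h3 : 4 * n * av (fun α => f α ^ 2) = av (fun α => ∑ I, ∑ J, (f α - f (α * swap I J)) ^ 2) := by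
    rw [av_sum]
    simp_rw [av_sum, h2, ← Finset.mul_sum, ← av_sum, ← Finset.mul_sum, h1, ← av_mul_left]
    congr 1; ext α; ring
  have h4 : av (fun α => ∑ I, ∑ J, (f α - f (α * swap I J)) ^ 2) ≤
     av (fun α => 8 * (n * lin (fun i k => x i k ^ 2) α) + 8 * ∑ I, ∑ k, x I k ^ 2) := by
    apply av_mono; intro α
    have : ∀ I J, f α - f (α * swap I J) = x I (α I) + x J (α J) - x I (α J) - x J (α I) := by
      intro I J; rw [← lin_diff]; simp only [hf]; ring
    simp_rw [this]
    exact sum_four x α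
  rw [av_add, av_mul_left, av_mul_left, av_lin hn, av_const, ← h3] at h4
  have h5 : (n:ℝ) * ((∑ i, ∑ k, x i k ^ 2) / n) = ∑ i, ∑ k, x i k ^ 2 := by field_simp
  rw [h5] at h4
  rw [div_mul_eq_mul_div, le_div_iff₀ hn']
  change av (fun α => f α ^ 2) * n ≤ _
  nlinarith

lemma lin_nonneg_mgf (hn : 0 < n) (x : Fin n → Fin n → ℝ) (b T : ℝ) (hx0 : ∀ i k, 0 ≤ x i k)
    (hxb : ∀ i k, x i k ≤ b) (hb : 0 ≤ b) (hT : 0 < T) (hbT : 4 * b * T ≤ 1 / 10) :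
    av (fun α => Real.exp (T * lin x α)) ≤ Real.exp (10 / 9 * T * ((∑ i, ∑ k, x i k) / n)) := by
  rw [← av_lin hn]
  refine perm_selfbound hn (lin x) (fun α => Finset.sum_nonneg fun i _ => hx0 _ _) (4 * b) T
    (by positivity) hT hbT fun α => ?_
  have h1 : ∀ I J, (max (lin x α - lin x (α * swap I J)) 0) ^ 2 ≤ 2 * b * (x I (α I) + x J (α J)) := by
    intro I J
    rw [lin_diff]
    have a1 := hx0 I (α I)
    have a2 := hx0 J (α J)
    have a3 := hx0 I (α J)
    have a4 := hx0 J (α I)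
    have b1 := hxb I (α I)
    have b2 := hxb J (α J)
    have : max (x I (α I) + x J (α J) - x I (α J) - x J (α I)) 0 ≤ x I (α I) + x J (α J) :=
      max_le (by linarith) (by linarith)
    calc _ ≤ (x I (α I) + x J (α J)) ^ 2 := by
          apply pow_le_pow_left₀ (le_max_right _ _) this
      _ ≤ _ := by nlinarith
  refine (Finset.sum_le_sum fun I _ => Finset.sum_le_sum fun J _ => h1 I J).trans (le_of_eq ?_)
  simp only [← Finset.mul_sum, Finset.sum_add_distrib]
  simp [← Finset.mul_sum, lin]
  ring

lemma lin_subgauss (hn : 0 < n) (x : Fin n → Fin n → ℝ) (r T : ℝ) (hr : 0 < r) (hT : 0 < T)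
    (hrT : T ^ 2 ≤ r / 10) :
    av (fun α => Real.exp (T * (lin x α - (∑ i, ∑ k, x i k) / n))) ≤
      Real.exp (10 / 9 * (T ^ 2 / r) * Real.log (av (fun α : Perm (Fin n) => Real.exp (r *
        (8 * lin (fun i k => x i k ^ 2) α + 8 * ((∑ i, ∑ k, x i k ^ 2) / n)))))) := by
  have hn' : (0:ℝ) < n := by exact_mod_cast hn
  refine perm_subgauss hn (fun α => lin x α - (∑ i, ∑ k, x i k) / n)
    (fun α => 8 * lin (fun i k => x i k ^ 2) α + 8 * ((∑ i, ∑ k, x i k ^ 2) / n)) ?_ ?_ r T hr hT hrT ?_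
  · rw [av_sub, av_const, av_lin hn, sub_self]
  · intro α
    have : 0 ≤ lin (fun i k => x i k ^ 2) α := Finset.sum_nonneg fun i _ => sq_nonneg _
    positivity
  · intro α
    have h1 : ∀ I J, (max (lin x α - (∑ i, ∑ k, x i k) / n - (lin x (α * swap I J) - (∑ i, ∑ k, x i k) / n)) 0) ^ 2
       ≤ (x I (α I) + x J (α J) - x I (α J) - x J (α I)) ^ 2 := by
      intro I J
      rw [sub_sub_sub_cancel_right, lin_diff]
      rcases le_total (x I (α I) + x J (α J) - x I (α J) - x J (α I)) 0 with h | h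
      · rw [max_eq_right h]; rw [zero_pow two_ne_zero]; exact sq_nonneg _
      · rw [max_eq_left h]
    refine (Finset.sum_le_sum fun I _ => Finset.sum_le_sum fun J _ => h1 I J).trans ?_
    refine (sum_four x α).trans (le_of_eq ?_)
    unfold lin
    field_simp

end linstat

section core
open Equiv
variable {n m : ℕ}

/-- centred (in the first and third index) partial sums -/
noncomputable def aa (e : Fin n → Fin m → Fin n → Fin m → ℝ) (α : Perm (Fin n)) (j l : Fin m) : ℝ :=
  lin (fun i k => e i j k l) α - av (lin (fun i k => e i j k l))

lemma aa_diff (e : Fin n → Fin m → Fin n → Fin m → ℝ) (α : Perm (Fin n)) (j l : Fin m) (I J : Fin n) :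
    aa e α j l - aa e (α * swap I J) j l =
      e I j (α I) l + e J j (α J) l - e I j (α J) l - e J j (α I) l := by
  unfold aa
  rw [sub_sub_sub_cancel_right, lin_diff]

lemma g_self (e : Fin n → Fin m → Fin n → Fin m → ℝ) (b : ℝ) (hn : 0 < n)
    (Hop : ∀ (α : Perm (Fin n)) (β : Perm (Fin m)) (y : Fin m → ℝ),
      ∑ i, (∑ j, e i j (α i) (β j) * y j) ^ 2 ≤ b ^ 2 * ∑ j, y j ^ 2)
    (β : Perm (Fin m)) (α : Perm (Fin n)) :
    ∑ I, ∑ J, (max (∑ j, aa e α j (β j) ^ 2 - ∑ j, aa e (α * swap I J) j (β j) ^ 2) 0) ^ 2 ≤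
      n * (64 * b ^ 2 * ∑ j, aa e α j (β j) ^ 2) := by
  have hn' : (0:ℝ) < n := by exact_mod_cast hn
  set U : Fin n → Fin n → ℝ := fun I k => ∑ j, e I j k (β j) * aa e α j (β j) with hU
  have h1 : ∀ I J, (max (∑ j, aa e α j (β j) ^ 2 - ∑ j, aa e (α * swap I J) j (β j) ^ 2) 0) ^ 2 ≤
      4 * (U I (α I) + U J (α J) - U I (α J) - U J (α I)) ^ 2 := by
    intro I J
    have h2 : ∑ j, aa e α j (β j) ^ 2 - ∑ j, aa e (α * swap I J) j (β j) ^ 2 ≤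
        2 * (U I (α I) + U J (α J) - U I (α J) - U J (α I)) := by
      simp only [hU]
      rw [← Finset.sum_sub_distrib, ← Finset.sum_add_distrib, ← Finset.sum_sub_distrib,
        ← Finset.sum_sub_distrib, Finset.mul_sum]
      apply Finset.sum_le_sum
      intro j _
      have := aa_diff e α j (β j) I J
      have h3 : e I j (α I) (β j) * aa e α j (β j) + e J j (α J) (β j) * aa e α j (β j) -
          e I j (α J) (β j) * aa e α j (β j) - e J j (α I) (β j) * aa e α j (β j) =
          aa e α j (β j) * (aa e α j (β j) - aa e (α * swap I J) j (β j)) := by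
        rw [this]; ring
      rw [h3]
      nlinarith [sq_nonneg (aa e α j (β j) - aa e (α * swap I J) j (β j))]
    set Z := U I (α I) + U J (α J) - U I (α J) - U J (α I)
    rcases le_total (∑ j, aa e α j (β j) ^ 2 - ∑ j, aa e (α * swap I J) j (β j) ^ 2) 0 with h | h
    · rw [max_eq_right h, zero_pow two_ne_zero]; positivity
    · rw [max_eq_left h]
      calc _ ≤ (2 * Z) ^ 2 := pow_le_pow_left₀ h h2 2
        _ = _ := by ring
  refine (Finset.sum_le_sum fun I _ => Finset.sum_le_sum fun J _ => h1 I J).trans ?_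
  simp only [← Finset.mul_sum]
  have h4 := sum_four U α
  have h5 : ∀ α' : Perm (Fin n), ∑ I, U I (α' I) ^ 2 ≤ b ^ 2 * ∑ j, aa e α j (β j) ^ 2 := fun α' =>
    Hop α' β (fun j => aa e α j (β j))
  have h6 : (∑ I, ∑ k, U I k ^ 2) / n ≤ b ^ 2 * ∑ j, aa e α j (β j) ^ 2 := by
    rw [← av_lin hn (fun I k => U I k ^ 2), ← av_const (Ω := Perm (Fin n)) (b ^ 2 * ∑ j, aa e α j (β j) ^ 2)]
    exact av_mono h5
  rw [div_le_iff₀ hn'] at h6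
  have h7 := mul_le_mul_of_nonneg_left (h5 α) hn'.le
  linarith

lemma g_mgf (e : Fin n → Fin m → Fin n → Fin m → ℝ) (b : ℝ) (hn : 0 < n) (hm : 0 < m) (hb : 0 < b)
    (Hop : ∀ (α : Perm (Fin n)) (β : Perm (Fin m)) (y : Fin m → ℝ),
      ∑ i, (∑ j, e i j (α i) (β j) * y j) ^ 2 ≤ b ^ 2 * ∑ j, y j ^ 2)
    (x : ℝ) (hx : x * (640 * b ^ 2) = 1) :
    av (fun α => av (fun β : Perm (Fin m) => Real.exp (x * ∑ j, aa e α j (β j) ^ 2))) ≤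
      Real.exp (5 * x * ((∑ i, ∑ j, ∑ k, ∑ l, e i j k l ^ 2) / (n * m))) := by
  have hn' : (0:ℝ) < n := by exact_mod_cast hn
  have hm' : (0:ℝ) < m := by exact_mod_cast hm
  have hb2 : 0 < b ^ 2 := by positivity
  have hx0 : 0 < x := by
    by_contra h
    have : x * (640 * b ^ 2) ≤ 0 := mul_nonpos_of_nonpos_of_nonneg (not_lt.1 h) (by positivity)
    linarith
  rw [av_comm]
  set c : Fin m → Fin m → ℝ := fun j l => 4 / n * ∑ i, ∑ k, e i j k l ^ 2 with hc
  have h1 : ∀ β : Perm (Fin m), av (fun α => Real.exp (x * ∑ j, aa e α j (β j) ^ 2)) ≤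
      Real.exp (10 / 9 * x * lin c β) := by
    intro β
    refine (perm_selfbound hn (fun α => ∑ j, aa e α j (β j) ^ 2)
      (fun α => Finset.sum_nonneg fun j _ => sq_nonneg _) (64 * b ^ 2) x (by positivity) hx0
      (by linarith) (g_self e b hn Hop β)).trans ?_
    rw [Real.exp_le_exp]
    gcongr
    rw [av_sum]
    unfold lin
    apply Finset.sum_le_sum
    intro j _
    exact lin_var hn (fun i k => e i j k (β j))
  have hcb : ∀ j l, c j l ≤ 4 * b ^ 2 := by
    intro j l
    have h2 : (∑ i, ∑ k, e i j k l ^ 2) / n ≤ b ^ 2 := by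
      rw [← av_lin hn (fun i k => e i j k l ^ 2), ← av_const (Ω := Perm (Fin n)) (b ^ 2)]
      apply av_mono
      intro α
      have := Hop α (swap j l) (Pi.single j 1)
      simpa [Pi.single_apply, lin] using this
    simp only [hc]
    calc _ = 4 * ((∑ i, ∑ k, e i j k l ^ 2) / n) := by ring
      _ ≤ _ := by gcongr
  refine (av_mono h1).trans ?_
  refine (lin_nonneg_mgf hm c (4 * b ^ 2) (10 / 9 * x) (fun j l => by positivity) hcb (by positivity)
    (by positivity) (by nlinarith)).trans ?_
  rw [Real.exp_le_exp]
  have h3 : ∑ j, ∑ l, c j l = 4 / n * ∑ i, ∑ j, ∑ k, ∑ l, e i j k l ^ 2 := by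
    simp only [hc, ← Finset.mul_sum]
    congr 1
    rw [Finset.sum_comm' (t' := Finset.univ) (s' := fun _ => Finset.univ) (by simp)]
    calc ∑ y, ∑ x, ∑ i, ∑ k, e i x k y ^ 2 = ∑ y, ∑ i, ∑ x, ∑ k, e i x k y ^ 2 :=
          Finset.sum_congr rfl fun _ _ => Finset.sum_comm
      _ = ∑ i, ∑ y, ∑ x, ∑ k, e i x k y ^ 2 := Finset.sum_comm
      _ = ∑ i, ∑ x, ∑ y, ∑ k, e i x k y ^ 2 := Finset.sum_congr rfl fun _ _ => Finset.sum_comm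
      _ = _ := Finset.sum_congr rfl fun _ _ => Finset.sum_congr rfl fun _ _ => Finset.sum_comm
  rw [h3]
  set S := ∑ i, ∑ j, ∑ k, ∑ l, e i j k l ^ 2
  have hS : 0 ≤ S := by positivity
  have h4 : 0 ≤ x * (S / (n * m)) := by positivity
  calc _ = 400 / 81 * (x * (S / (n * m))) := by field_simp; ring
    _ ≤ 5 * (x * (S / (n * m))) := by gcongr; norm_num
    _ = _ := by ring

lemma core (e : Fin n → Fin m → Fin n → Fin m → ℝ) (b : ℝ) (hn : 0 < n) (hm : 0 < m) (hb : 0 < b)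
    (Hop : ∀ (α : Perm (Fin n)) (β : Perm (Fin m)) (y : Fin m → ℝ),
      ∑ i, (∑ j, e i j (α i) (β j) * y j) ^ 2 ≤ b ^ 2 * ∑ j, y j ^ 2)
    (s : ℝ) (hs : 0 < s) (hsb : s * (320 * b) ≤ 1) :
    av (fun α => av (fun β : Perm (Fin m) => Real.exp (s * (lin (aa e α) β - (∑ j, ∑ l, aa e α j l) / m)))) ≤
      Real.exp (90 * s ^ 2 * ((∑ i, ∑ j, ∑ k, ∑ l, e i j k l ^ 2) / (n * m))) := by
  have hn' : (0:ℝ) < n := by exact_mod_cast hn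
  have hm' : (0:ℝ) < m := by exact_mod_cast hm
  have hb2 : 0 < b ^ 2 := by positivity
  set x : ℝ := 1 / (640 * b ^ 2) with hxdef
  have hx : x * (640 * b ^ 2) = 1 := by rw [hxdef]; field_simp
  have hx0 : 0 < x := by positivity
  have hG := g_mgf e b hn hm hb Hop x hx
  set S := (∑ i, ∑ j, ∑ k, ∑ l, e i j k l ^ 2) / ((n:ℝ) * m) with hS
  have hS0 : 0 ≤ S := by positivity
  set r := x / 16 with hr
  have hr0 : 0 < r := by positivity
  have hsr : s ^ 2 ≤ r / 10 := by
    have h1 : (s * (320 * b)) ^ 2 ≤ 1 := by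
      apply pow_le_one₀ (by positivity) hsb
    have h2 : s ^ 2 * (102400 * b ^ 2) ≤ 1 := by nlinarith
    rw [hr, hxdef]
    rw [div_div, div_div, le_div_iff₀ (by positivity)]
    nlinarith
  set p := 10 / 9 * (s ^ 2 / r) with hp
  have hp0 : 0 ≤ p := by positivity
  have hp1 : p ≤ 1 := by
    have : s ^ 2 / r ≤ 1 / 10 := by rw [div_le_iff₀ hr0]; linarith
    rw [hp]; linarith
  set X : Perm (Fin n) → ℝ := fun α => av (fun β : Perm (Fin m) => Real.exp (x * ∑ j, aa e α j (β j) ^ 2)) with hX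
  have hXpos : ∀ α, 0 < X α := fun α => av_pos fun _ => Real.exp_pos _
  have h1 : ∀ α, av (fun β : Perm (Fin m) => Real.exp (s * (lin (aa e α) β - (∑ j, ∑ l, aa e α j l) / m))) ≤
      Real.exp (p * Real.log (X α)) := by
    intro α
    refine (lin_subgauss hm (aa e α) r s hr0 hs hsr).trans ?_
    rw [Real.exp_le_exp]
    apply mul_le_mul_of_nonneg_left _ hp0
    apply Real.log_le_log (av_pos fun _ => Real.exp_pos _)
    set W := (∑ j, ∑ l, aa e α j l ^ 2) / (m:ℝ) with hW
    have hWX : Real.exp (x * W) ≤ X α := by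
      have : x * W = av (fun β : Perm (Fin m) => x * lin (fun j l => aa e α j l ^ 2) β) := by
        rw [av_mul_left, av_lin hm]
      rw [this]
      exact exp_av_le _
    have h2 : ∀ β : Perm (Fin m), Real.exp (r * (8 * lin (fun j l => aa e α j l ^ 2) β + 8 * W)) ≤
        1 / 2 * Real.exp (x * ∑ j, aa e α j (β j) ^ 2) + 1 / 2 * X α := by
      intro β
      have := convexOn_exp.2 (Set.mem_univ (x * ∑ j, aa e α j (β j) ^ 2)) (Set.mem_univ (x * W))
        (show (0:ℝ) ≤ 1 / 2 by norm_num) (show (0:ℝ) ≤ 1 / 2 by norm_num) (by norm_num)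
      simp only [smul_eq_mul] at this
      have h3 : r * (8 * lin (fun j l => aa e α j l ^ 2) β + 8 * W) =
         1 / 2 * (x * ∑ j, aa e α j (β j) ^ 2) + 1 / 2 * (x * W) := by
        rw [hr]; unfold lin; ring
      rw [h3]
      linarith
    refine (av_mono h2).trans (le_of_eq ?_)
    rw [av_add, av_const, av_mul_left]
    change 1 / 2 * X α + 1 / 2 * X α = X α
    ring
  refine (av_mono h1).trans ?_
  set y := 5 * x * S with hy
  have h2 : ∀ α, Real.exp (p * Real.log (X α)) ≤ Real.exp (-((1 - p) * y)) * (p * X α + (1 - p) * Real.exp y) := by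
    intro α
    have := convexOn_exp.2 (Set.mem_univ (Real.log (X α))) (Set.mem_univ y)
        hp0 (show (0:ℝ) ≤ 1 - p by linarith) (by ring)
    simp only [smul_eq_mul] at this
    rw [Real.exp_log (hXpos α)] at this
    calc _ = Real.exp (-((1 - p) * y)) * Real.exp (p * Real.log (X α) + (1 - p) * y) := by
          rw [← Real.exp_add]; ring_nf
      _ ≤ _ := by gcongr
  refine (av_mono h2).trans ?_
  rw [av_mul_left, av_add, av_const, av_mul_left]
  calc Real.exp (-((1 - p) * y)) * (p * av X + (1 - p) * Real.exp y)
      ≤ Real.exp (-((1 - p) * y)) * (p * Real.exp y + (1 - p) * Real.exp y) := by gcongr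
    _ = Real.exp (p * y) := by
        rw [← add_mul, add_sub_cancel, one_mul, ← Real.exp_add]; ring_nf
    _ ≤ _ := by
        rw [Real.exp_le_exp]
        have : p * y = 800 / 9 * (s ^ 2 * S) := by
          rw [hp, hy, hr]; field_simp; ring
        rw [this]
        have : 0 ≤ s ^ 2 * S := by positivity
        linarith
end core

section comb
open Equiv
variable {N : ℕ}

lemma av_right (f : Perm (Fin N) → ℝ) (σ : Perm (Fin N)) : av (fun ρ => f (ρ * σ)) = av f :=
  av_equiv (Equiv.mulRight σ) f

/-- joint average along a uniformly random relabelling -/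
noncomputable def uu (D : Fin N → Fin N → Fin N → Fin N → ℝ) (a b c e : Fin N) : ℝ :=
  av (fun ρ : Perm (Fin N) => D (ρ a) (ρ b) (ρ c) (ρ e))

lemma uu_inv (D : Fin N → Fin N → Fin N → Fin N → ℝ) (σ : Perm (Fin N)) (a b c e : Fin N) :
    uu D (σ a) (σ b) (σ c) (σ e) = uu D a b c e := by
  unfold uu
  exact av_right (fun ρ => D (ρ a) (ρ b) (ρ c) (ρ e)) σ

lemma off_sum (s : Finset (Fin N)) (f : Fin N → ℝ) (c : Fin N) (h : ∀ x ∉ s, f x = f c) :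
    ∑ x, f x = ∑ x ∈ s, f x + ((N:ℝ) - s.card) * f c := by
  rw [← Finset.sum_add_sum_compl s f]
  congr 1
  rw [Finset.sum_congr rfl (fun x hx => h x (Finset.mem_compl.1 hx)), Finset.sum_const,
    Finset.card_compl, nsmul_eq_mul, Nat.cast_sub (by simpa using Finset.card_le_univ s)]
  simp

lemma av_pair (hN : 0 < N) (w : Fin N → Fin N → ℝ) (a b : Fin N) (hab : a ≠ b) :
    (N:ℝ) * (N - 1) * av (fun ρ : Perm (Fin N) => w (ρ a) (ρ b)) = ∑ i, ∑ j, w i j - ∑ i, w i i := by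
  have hN' : (0:ℝ) < N := by exact_mod_cast hN
  have h1 : ∑ x, av (fun ρ : Perm (Fin N) => w (ρ a) (ρ x)) = (∑ i, ∑ j, w i j) / N := by
    rw [← av_sum]
    rw [← av_point hN (fun i => ∑ j, w i j) a]
    congr 1; ext ρ
    exact Equiv.sum_comp ρ (fun j => w (ρ a) j)
  have h2 := off_sum {a} (fun x => av (fun ρ : Perm (Fin N) => w (ρ a) (ρ x))) b (by
    intro x hx
    simp only [Finset.mem_singleton] at hx
    rw [← av_right (fun ρ : Perm (Fin N) => w (ρ a) (ρ x)) (swap x b)]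
    congr 1; ext ρ
    simp [Perm.mul_apply, swap_apply_of_ne_of_ne (Ne.symm hx) hab])
  rw [h1] at h2
  have h3 := av_point hN (fun i => w i i) a
  simp only [Finset.sum_singleton, Finset.card_singleton, Nat.cast_one] at h2
  rw [h3] at h2
  field_simp at h2
  linarith

variable (D : Fin N → Fin N → Fin N → Fin N → ℝ)

lemma uu_val (hN : 4 ≤ N)
    (h1 : ∀ i j k, ∑ l, D i j k l = 0) (h2 : ∀ i j l, ∑ k, D i j k l = 0)
    (h3 : ∀ i k l, ∑ j, D i j k l = 0) (h4 : ∀ j k l, ∑ i, D i j k l = 0)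
    (a b : Fin N) (hab : a ≠ b) :
    (N:ℝ) * (N - 1) * uu D a b a b = ∑ i, ∑ j, D i j i j - ∑ i, D i i i i ∧
    (∀ c, c ≠ a → c ≠ b → (N:ℝ) * (N - 1) * (N - 2) * uu D a b c b =
      2 * (∑ i, D i i i i) - ∑ i, ∑ j, D i j i j) ∧
    (∀ e, e ≠ a → e ≠ b → (N:ℝ) * (N - 1) * (N - 2) * uu D a b a e =
      2 * (∑ i, D i i i i) - ∑ i, ∑ j, D i j i j) ∧
    (∀ c e, c ≠ a → c ≠ b → e ≠ a → e ≠ b → c ≠ e →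
      (N:ℝ) * (N - 1) * (N - 2) * (N - 3) * uu D a b c e =
      ∑ i, ∑ j, D i j i j + ∑ i, ∑ j, D i j j i + ∑ i, ∑ j, D i i j j - 6 * ∑ i, D i i i i) := by
  have hN0 : 0 < N := by omega
  have hNr : (4:ℝ) ≤ N := by exact_mod_cast hN
  set Q := ∑ i, ∑ j, D i j i j
  set Δ := ∑ i, D i i i i
  set P := ∑ i, ∑ j, D i j j i
  set K := ∑ i, ∑ j, D i i j j
  have H1 : ∀ i j k, ∑ l, uu D i j k l = 0 := by
    intro i j k; unfold uu; rw [← av_sum]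
    have : ∀ ρ : Perm (Fin N), ∑ l, D (ρ i) (ρ j) (ρ k) (ρ l) = 0 := fun ρ => by
      rw [Equiv.sum_comp ρ (fun l => D (ρ i) (ρ j) (ρ k) l), h1]
    simp only [this, av_const]
  have H2 : ∀ i j l, ∑ k, uu D i j k l = 0 := by
    intro i j k; unfold uu; rw [← av_sum]
    have : ∀ ρ : Perm (Fin N), ∑ l, D (ρ i) (ρ j) (ρ l) (ρ k) = 0 := fun ρ => by
      rw [Equiv.sum_comp ρ (fun l => D (ρ i) (ρ j) l (ρ k)), h2]
    simp only [this, av_const]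
  have H3 : ∀ i k l, ∑ j, uu D i j k l = 0 := by
    intro i j k; unfold uu; rw [← av_sum]
    have : ∀ ρ : Perm (Fin N), ∑ l, D (ρ i) (ρ l) (ρ j) (ρ k) = 0 := fun ρ => by
      rw [Equiv.sum_comp ρ (fun l => D (ρ i) l (ρ j) (ρ k)), h3]
    simp only [this, av_const]
  have H4 : ∀ j k l, ∑ i, uu D i j k l = 0 := by
    intro i j k; unfold uu; rw [← av_sum]
    have : ∀ ρ : Perm (Fin N), ∑ l, D (ρ l) (ρ i) (ρ j) (ρ k) = 0 := fun ρ => by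
      rw [Equiv.sum_comp ρ (fun l => D l (ρ i) (ρ j) (ρ k)), h4]
    simp only [this, av_const]
  have A0 : ∀ a, (N:ℝ) * uu D a a a a = Δ := by
    intro a
    unfold uu
    rw [av_point hN0 (fun i => D i i i i) a]
    field_simp
    rfl
  have Q0 : ∀ a b, a ≠ b → (N:ℝ) * (N - 1) * uu D a b a b = Q - Δ := fun a b hab =>
    av_pair hN0 (fun i j => D i j i j) a b hab
  have P0 : ∀ a b, a ≠ b → (N:ℝ) * (N - 1) * uu D a b b a = P - Δ := fun a b hab =>
    av_pair hN0 (fun i j => D i j j i) a b hab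
  have K0 : ∀ a b, a ≠ b → (N:ℝ) * (N - 1) * uu D a a b b = K - Δ := fun a b hab =>
    av_pair hN0 (fun i j => D i i j j) a b hab
  have T1 : ∀ a b, a ≠ b → (N:ℝ) * (N - 1) * uu D a b b b = - Δ := by
    intro a b hab
    have := off_sum {b} (fun x => uu D x b b b) a (by
      intro x hx
      simp only [Finset.mem_singleton] at hx
      have := uu_inv D (swap x a) x b b b
      rwa [swap_apply_left, swap_apply_of_ne_of_ne (Ne.symm hx) hab.symm, eq_comm] at this)
    rw [H4] at this
    simp at this
    linear_combination (-(N:ℝ)) * this - A0 b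
  have T2 : ∀ a b, a ≠ b → (N:ℝ) * (N - 1) * uu D a b a a = - Δ := by
    intro a b hab
    have := off_sum {a} (fun x => uu D a x a a) b (by
      intro x hx
      simp only [Finset.mem_singleton] at hx
      have := uu_inv D (swap x b) a x a a
      rwa [swap_apply_left, swap_apply_of_ne_of_ne (Ne.symm hx) hab, eq_comm] at this)
    rw [H3] at this
    simp at this
    linear_combination (-(N:ℝ)) * this - A0 a
  have U1 : ∀ a b, a ≠ b → ∀ c, c ≠ a → c ≠ b → (N:ℝ) * (N - 1) * (N - 2) * uu D a b c b = 2 * Δ - Q := by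
    intro a b hab c hca hcb
    have := off_sum {a, b} (fun x => uu D a b x b) c (by
      intro x hx
      simp only [Finset.mem_insert, Finset.mem_singleton, not_or] at hx
      have := uu_inv D (swap x c) a b x b
      rwa [swap_apply_left, swap_apply_of_ne_of_ne (Ne.symm hx.1) hca.symm,
        swap_apply_of_ne_of_ne (Ne.symm hx.2) hcb.symm, eq_comm] at this)
    rw [H2, Finset.sum_pair hab, Finset.card_pair hab] at this
    push_cast at this
    linear_combination (-(N:ℝ) * (N - 1)) * this - Q0 a b hab - T1 a b hab
  have U2 : ∀ a b, a ≠ b → ∀ c, c ≠ a → c ≠ b → (N:ℝ) * (N - 1) * (N - 2) * uu D a b a c = 2 * Δ - Q := by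
    intro a b hab c hca hcb
    have := off_sum {a, b} (fun x => uu D a b a x) c (by
      intro x hx
      simp only [Finset.mem_insert, Finset.mem_singleton, not_or] at hx
      have := uu_inv D (swap x c) a b a x
      rwa [swap_apply_left, swap_apply_of_ne_of_ne (Ne.symm hx.1) hca.symm,
        swap_apply_of_ne_of_ne (Ne.symm hx.2) hcb.symm, eq_comm] at this)
    rw [H1, Finset.sum_pair hab, Finset.card_pair hab] at this
    push_cast at this
    linear_combination (-(N:ℝ) * (N - 1)) * this - Q0 a b hab - T2 a b hab
  have U3 : ∀ a b, a ≠ b → ∀ c, c ≠ a → c ≠ b → (N:ℝ) * (N - 1) * (N - 2) * uu D a b c a = 2 * Δ - P := by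
    intro a b hab c hca hcb
    have := off_sum {a, b} (fun x => uu D a b x a) c (by
      intro x hx
      simp only [Finset.mem_insert, Finset.mem_singleton, not_or] at hx
      have := uu_inv D (swap x c) a b x a
      rwa [swap_apply_left, swap_apply_of_ne_of_ne (Ne.symm hx.1) hca.symm,
        swap_apply_of_ne_of_ne (Ne.symm hx.2) hcb.symm, eq_comm] at this)
    rw [H2, Finset.sum_pair hab, Finset.card_pair hab] at this
    push_cast at this
    linear_combination (-(N:ℝ) * (N - 1)) * this - P0 a b hab - T2 a b hab
  have U4 : ∀ a b, a ≠ b → ∀ c, c ≠ a → c ≠ b → (N:ℝ) * (N - 1) * (N - 2) * uu D a b c c = 2 * Δ - K := by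
    intro a b hab c hca hcb
    have := off_sum {a, c} (fun x => uu D a x c c) b (by
      intro x hx
      simp only [Finset.mem_insert, Finset.mem_singleton, not_or] at hx
      have := uu_inv D (swap x b) a x c c
      rwa [swap_apply_left, swap_apply_of_ne_of_ne (Ne.symm hx.1) hab,
        swap_apply_of_ne_of_ne (Ne.symm hx.2) hcb, eq_comm] at this)
    rw [H3, Finset.sum_pair hca.symm, Finset.card_pair hca.symm] at this
    push_cast at this
    linear_combination (-(N:ℝ) * (N - 1)) * this - K0 a c hca.symm - T1 a c hca.symm
  refine ⟨Q0 a b hab, U1 a b hab, U2 a b hab, ?_⟩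
  intro c e hca hcb hea heb hce
  have := off_sum {a, b, c} (fun x => uu D a b c x) e (by
      intro x hx
      simp only [Finset.mem_insert, Finset.mem_singleton, not_or] at hx
      have := uu_inv D (swap x e) a b c x
      rwa [swap_apply_left, swap_apply_of_ne_of_ne (Ne.symm hx.1) hea.symm,
        swap_apply_of_ne_of_ne (Ne.symm hx.2.1) heb.symm,
        swap_apply_of_ne_of_ne (Ne.symm hx.2.2) hce, eq_comm] at this)
  have hn1 : a ∉ ({b, c} : Finset (Fin N)) := by simp [hab, hca.symm]
  rw [H1, Finset.sum_insert hn1, Finset.sum_pair hcb.symm, Finset.card_insert_of_notMem hn1,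
    Finset.card_pair hcb.symm] at this
  push_cast at this
  linear_combination (-(N:ℝ) * (N - 1) * (N - 2)) * this - U1 a b hab c hca hcb - U3 a b hab c hca hcb
    - U4 a b hab c hca hcb

end comb

section decouple
open Equiv
variable {n m : ℕ}

/-- block permutation -/
def blk (α : Perm (Fin n)) (β : Perm (Fin m)) : Perm (Fin (n + m)) :=
  finSumFinEquiv.permCongr (Equiv.sumCongr α β)

lemma blk_left (α : Perm (Fin n)) (β : Perm (Fin m)) (i : Fin n) :
    blk α β (Fin.castAdd m i) = Fin.castAdd m (α i) := by
  simp [blk, Equiv.permCongr_apply]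

lemma blk_right (α : Perm (Fin n)) (β : Perm (Fin m)) (j : Fin m) :
    blk α β (Fin.natAdd n j) = Fin.natAdd n (β j) := by
  simp [blk, Equiv.permCongr_apply]

noncomputable def QQ (e : Fin n → Fin m → Fin n → Fin m → ℝ) : ℝ :=
  (∑ j, ∑ i, e i j i j - (∑ j, ∑ i, ∑ k, e i j k j) / n) -
    (∑ j, ∑ l, ∑ i, e i j i l - (∑ j, ∑ l, ∑ i, ∑ k, e i j k l) / n) / m

lemma QQ_core (hn : 0 < n) (e : Fin n → Fin m → Fin n → Fin m → ℝ) (α : Perm (Fin n)) (β : Perm (Fin m)) :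
    QQ (fun i j k l => e i j (α k) (β l)) = lin (aa e α) β - (∑ j, ∑ l, aa e α j l) / m := by
  have h1 : ∀ i j l, ∑ k, e i j (α k) l = ∑ k, e i j k l := fun i j l =>
    Equiv.sum_comp α (fun k => e i j k l)
  have h2 : ∀ j, ∑ l, ∑ i, e i j (α i) (β l) = ∑ l, ∑ i, e i j (α i) l := fun j =>
    Equiv.sum_comp β (fun l => ∑ i, e i j (α i) l)
  have h3 : ∀ j, ∑ l, ∑ i, ∑ k, e i j k (β l) = ∑ l, ∑ i, ∑ k, e i j k l := fun j =>
    Equiv.sum_comp β (fun l => ∑ i, ∑ k, e i j k l)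
  unfold QQ aa
  simp only [h1, h2, h3]
  simp only [av_lin hn]
  simp only [lin, Finset.sum_sub_distrib, Finset.sum_div]

noncomputable def ee (d : Fin (n+m) → Fin (n+m) → Fin (n+m) → Fin (n+m) → ℝ) (ρ τ : Perm (Fin (n+m)))
    (i : Fin n) (j : Fin m) (k : Fin n) (l : Fin m) : ℝ :=
  d (ρ (Fin.castAdd m i)) (ρ (Fin.natAdd n j)) (τ (Fin.castAdd m k)) (τ (Fin.natAdd n l))

lemma ee_blk (d : Fin (n+m) → Fin (n+m) → Fin (n+m) → Fin (n+m) → ℝ) (ρ τ : Perm (Fin (n+m)))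
    (α : Perm (Fin n)) (β : Perm (Fin m)) :
    ee d ρ (τ * blk α β) = fun i j k l => ee d ρ τ i j (α k) (β l) := by
  ext i j k l
  simp [ee, blk_left, blk_right]

lemma av_blk (f : Perm (Fin (n+m)) → ℝ) :
    av f = av (fun τ => av (fun α : Perm (Fin n) => av (fun β : Perm (Fin m) => f (τ * blk α β)))) := by
  rw [av_comm]
  rw [show (fun α : Perm (Fin n) => av (fun τ => av (fun β : Perm (Fin m) => f (τ * blk α β)))) =
    fun α => av f from ?_, av_const]
  ext α
  rw [av_comm]
  rw [show (fun β : Perm (Fin m) => av (fun τ => f (τ * blk α β))) =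
    fun β => av f from ?_, av_const]
  ext β
  exact av_right f _

lemma QQ_mean (hn : 0 < n) (hm : 0 < m)
    (d : Fin (n+m) → Fin (n+m) → Fin (n+m) → Fin (n+m) → ℝ) (ρ : Perm (Fin (n+m))) :
    av (fun τ => QQ (ee d ρ τ)) = 0 := by
  rw [av_blk]
  simp only [ee_blk, QQ_core hn, av_sub, av_const]
  have : ∀ x : Fin m → Fin m → ℝ, av (fun β => lin x β) = (∑ i, ∑ k, x i k) / m := fun x => av_lin hm x
  simp only [this, sub_self, av_const]

lemma sum_split (f : Fin (n+m) → ℝ) :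
    ∑ x, f x = ∑ i : Fin n, f (Fin.castAdd m i) + ∑ j : Fin m, f (Fin.natAdd n j) := Fin.sum_univ_add f

lemma sum_le_left (f : Fin (n+m) → ℝ) (hf : ∀ x, 0 ≤ f x) :
    ∑ i : Fin n, f (Fin.castAdd m i) ≤ ∑ x, f x := by
  rw [sum_split]
  have : 0 ≤ ∑ j : Fin m, f (Fin.natAdd n j) := Finset.sum_nonneg fun _ _ => hf _
  linarith

lemma sum_le_right (f : Fin (n+m) → ℝ) (hf : ∀ x, 0 ≤ f x) :
    ∑ j : Fin m, f (Fin.natAdd n j) ≤ ∑ x, f x := by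
  rw [sum_split]
  have : 0 ≤ ∑ j : Fin n, f (Fin.castAdd m j) := Finset.sum_nonneg fun _ _ => hf _
  linarith

lemma ee_sq (d : Fin (n+m) → Fin (n+m) → Fin (n+m) → Fin (n+m) → ℝ) (ρ τ : Perm (Fin (n+m))) :
    ∑ i, ∑ j, ∑ k, ∑ l, ee d ρ τ i j k l ^ 2 ≤ ∑ i, ∑ j, ∑ k, ∑ l, d i j k l ^ 2 := by
  have h0 : ∑ i, ∑ j, ∑ k, ∑ l, d i j k l ^ 2 = ∑ i, ∑ j, ∑ k, ∑ l, d (ρ i) (ρ j) (τ k) (τ l) ^ 2 := by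
    rw [← Equiv.sum_comp ρ]
    refine Finset.sum_congr rfl fun i _ => ?_
    rw [← Equiv.sum_comp ρ]
    refine Finset.sum_congr rfl fun j _ => ?_
    rw [← Equiv.sum_comp τ]
    refine Finset.sum_congr rfl fun k _ => ?_
    rw [← Equiv.sum_comp τ]
  rw [h0]
  refine le_trans ?_ (sum_le_left (fun i => ∑ j, ∑ k, ∑ l, d (ρ i) (ρ j) (τ k) (τ l) ^ 2) fun i => by positivity)
  refine Finset.sum_le_sum fun i _ => ?_
  refine le_trans ?_ (sum_le_right (fun j => ∑ k, ∑ l, d (ρ (Fin.castAdd m i)) (ρ j) (τ k) (τ l) ^ 2) fun i => by positivity)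
  refine Finset.sum_le_sum fun j _ => ?_
  refine le_trans ?_ (sum_le_left (fun k => ∑ l, d (ρ (Fin.castAdd m i)) (ρ (Fin.natAdd n j)) (τ k) (τ l) ^ 2) fun i => by positivity)
  refine Finset.sum_le_sum fun k _ => ?_
  exact sum_le_right (fun l => d (ρ (Fin.castAdd m i)) (ρ (Fin.natAdd n j)) (τ (Fin.castAdd m k)) (τ l) ^ 2) fun i => by positivity

lemma ee_op (d : Fin (n+m) → Fin (n+m) → Fin (n+m) → Fin (n+m) → ℝ) (b : ℝ)
    (Hop : ∀ (σ : Perm (Fin (n+m))) (y : Fin (n+m) → ℝ),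
      ∑ i, (∑ j, d i j (σ i) (σ j) * y j) ^ 2 ≤ b ^ 2 * ∑ j, y j ^ 2) (ρ τ : Perm (Fin (n+m)))
    (α : Perm (Fin n)) (β : Perm (Fin m)) (y : Fin m → ℝ) :
      ∑ i, (∑ j, ee d ρ τ i j (α i) (β j) * y j) ^ 2 ≤ b ^ 2 * ∑ j, y j ^ 2 := by
  set z : Fin (n+m) → ℝ := Fin.append (fun _ : Fin n => 0) y with hz
  have h := Hop (τ * blk α β * ρ⁻¹) (fun x => z (ρ⁻¹ x))
  rw [← Equiv.sum_comp ρ, ← Equiv.sum_comp ρ (fun j => z (ρ⁻¹ j) ^ 2)] at h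
  have h1 : ∀ i, ∑ j, d (ρ i) j ((τ * blk α β * ρ⁻¹) (ρ i)) ((τ * blk α β * ρ⁻¹) j) * z (ρ⁻¹ j) =
      ∑ j, d (ρ i) (ρ (Fin.natAdd n j)) (τ (blk α β i)) (τ (Fin.natAdd n (β j))) * y j := by
    intro i
    rw [← Equiv.sum_comp ρ, sum_split]
    simp [hz, blk_right]
  simp only [h1] at h
  have h2 : ∑ i, z (ρ⁻¹ (ρ i)) ^ 2 = ∑ j, y j ^ 2 := by
    rw [sum_split]
    simp [hz]
  rw [h2] at h
  refine le_trans ?_ h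
  refine le_trans (le_of_eq ?_) (sum_le_left _ fun i => sq_nonneg _)
  refine Finset.sum_congr rfl fun i _ => ?_
  simp [ee, blk_left]

/-- the symmetrised decoupled statistic -/
noncomputable def RR (n m : ℕ) (d : Fin (n+m) → Fin (n+m) → Fin (n+m) → Fin (n+m) → ℝ) (π : Perm (Fin (n+m))) : ℝ :=
  av (fun ρ => QQ (n := n) (m := m) (ee d ρ (π * ρ)))

lemma RR_mean (hn : 0 < n) (hm : 0 < m)
    (d : Fin (n+m) → Fin (n+m) → Fin (n+m) → Fin (n+m) → ℝ) :
    av (RR n m d) = 0 := by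
  unfold RR
  rw [av_comm]
  simp only [fun ρ => av_right (fun τ => QQ (n := n) (m := m) (ee d ρ τ)) ρ, QQ_mean hn hm, av_const]

lemma RR_mgf (hn : 0 < n) (hm : 0 < m)
    (d : Fin (n+m) → Fin (n+m) → Fin (n+m) → Fin (n+m) → ℝ) (b : ℝ) (hb : 0 < b)
    (Hop : ∀ (σ : Perm (Fin (n+m))) (y : Fin (n+m) → ℝ),
      ∑ i, (∑ j, d i j (σ i) (σ j) * y j) ^ 2 ≤ b ^ 2 * ∑ j, y j ^ 2)
    (s : ℝ) (hs : 0 < s) (hsb : s * (320 * b) ≤ 1) :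
    av (fun π => Real.exp (s * RR n m d π)) ≤
      Real.exp (90 * s ^ 2 * ((∑ i, ∑ j, ∑ k, ∑ l, d i j k l ^ 2) / (n * m))) := by
  have h1 : ∀ π, Real.exp (s * RR n m d π) ≤
      av (fun ρ => Real.exp (s * QQ (n := n) (m := m) (ee d ρ (π * ρ)))) := by
    intro π
    unfold RR
    rw [← av_mul_left]
    exact exp_av_le _
  refine (av_mono h1).trans ?_
  rw [av_comm]
  simp only [fun ρ => av_right (fun τ => Real.exp (s * QQ (n := n) (m := m) (ee d ρ τ))) ρ]
  rw [← av_const (Ω := Perm (Fin (n+m))) (Real.exp (90 * s ^ 2 * ((∑ i, ∑ j, ∑ k, ∑ l, d i j k l ^ 2) / (n * m))))]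
  apply av_mono
  intro ρ
  rw [av_blk]
  rw [← av_const (Ω := Perm (Fin (n+m))) (Real.exp (90 * s ^ 2 * ((∑ i, ∑ j, ∑ k, ∑ l, d i j k l ^ 2) / (n * m))))]
  apply av_mono
  intro τ
  simp only [ee_blk, QQ_core hn]
  refine (core (ee d ρ τ) b hn hm hb (ee_op d b Hop ρ τ) s hs hsb).trans ?_
  rw [Real.exp_le_exp]
  have := ee_sq d ρ τ
  gcongr

lemma RR_id (hn : 2 ≤ n) (hm : 2 ≤ m)
    (d : Fin (n+m) → Fin (n+m) → Fin (n+m) → Fin (n+m) → ℝ)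
    (h1 : ∀ i j k, ∑ l, d i j k l = 0) (h2 : ∀ i j l, ∑ k, d i j k l = 0)
    (h3 : ∀ i k l, ∑ j, d i j k l = 0) (h4 : ∀ j k l, ∑ i, d i j k l = 0)
    (π : Perm (Fin (n+m))) (N : ℝ) (hNr : N = n + m) :
    N * (N - 1) * (N - 2) * (N - 3) * RR n m d π = ((n:ℝ) - 1) * (m - 1) *
      ((N ^ 2 - 3 * N + 1) * (∑ i, ∑ j, d i j (π i) (π j)) + ∑ i, ∑ j, d i j (π j) (π i)
        + ∑ i, ∑ j, d i i j j - (N ^ 2 - N) * ∑ i, d i i (π i) (π i)) := by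
  have hn' : (n:ℝ) ≠ 0 := by positivity
  have hm' : (m:ℝ) ≠ 0 := by positivity
  have hN4 : (4:ℝ) ≤ N := by rw [hNr]; exact_mod_cast (by omega : 4 ≤ n + m)
  set D : Fin (n+m) → Fin (n+m) → Fin (n+m) → Fin (n+m) → ℝ := fun i j k l => d i j (π k) (π l) with hD
  have hval := uu_val D (by omega : 4 ≤ n + m)
    (fun i j k => by rw [← h1 i j (π k)]; exact Equiv.sum_comp π (fun l => d i j (π k) l))
    (fun i j l => by rw [← h2 i j (π l)]; exact Equiv.sum_comp π (fun k => d i j k (π l)))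
    (fun i k l => h3 i _ _) (fun j k l => h4 j _ _)
  have hK : ∑ i, ∑ j, D i i j j = ∑ i, ∑ j, d i i j j :=
    Finset.sum_congr rfl fun i _ => Equiv.sum_comp π (fun j => d i i j j)
  rw [hK] at hval
  push_cast at hval
  rw [← hNr] at hval
  change N * (N - 1) * (N - 2) * (N - 3) * RR n m d π = ((n:ℝ) - 1) * (m - 1) *
      ((N ^ 2 - 3 * N + 1) * (∑ i, ∑ j, D i j i j) + ∑ i, ∑ j, D i j j i
        + ∑ i, ∑ j, d i i j j - (N ^ 2 - N) * ∑ i, D i i i i)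
  set Q := ∑ i, ∑ j, D i j i j
  set P := ∑ i, ∑ j, D i j j i
  set K := ∑ i, ∑ j, d i i j j
  set Δ := ∑ i, D i i i i
  have hne : ∀ (i : Fin n) (j : Fin m), Fin.castAdd m i ≠ Fin.natAdd n j := by
    intro i j h
    have := congrArg Fin.val h
    simp at this
    omega
  set L := fun i : Fin n => Fin.castAdd m i with hL
  set M := fun j : Fin m => Fin.natAdd n j with hM
  have hLi : Function.Injective L := Fin.castAdd_injective n m
  have hMi : Function.Injective M := Fin.natAdd_injective m n
  have hRR : RR n m d π = QQ (fun i j k l => uu D (L i) (M j) (L k) (M l)) := by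
    unfold RR QQ
    simp only [av_sub, av_sum, div_eq_mul_inv, av_mul_right]
    rfl
  have hN1 : N ≠ 0 := by linarith
  have hN2 : N - 1 ≠ 0 := by intro h; linarith
  have hN3 : N - 2 ≠ 0 := by intro h; linarith
  have hN4' : N - 3 ≠ 0 := by intro h; linarith
  set q := (Q - Δ) / (N * (N - 1)) with hq
  set u := (2 * Δ - Q) / (N * (N - 1) * (N - 2)) with hu
  set v := (Q + P + K - 6 * Δ) / (N * (N - 1) * (N - 2) * (N - 3)) with hv
  have e1 : ∀ i j, uu D (L i) (M j) (L i) (M j) = q := fun i j => by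
    rw [hq, eq_div_iff (by positivity), mul_comm]; exact (hval _ _ (hne i j)).1
  have e2 : ∀ i j k, k ≠ i → uu D (L i) (M j) (L k) (M j) = u := fun i j k hk => by
    rw [hu, eq_div_iff (by positivity), mul_comm]
    exact (hval _ _ (hne i j)).2.1 _ (fun h => hk (hLi h)) (hne k j)
  have e3 : ∀ i j l, l ≠ j → uu D (L i) (M j) (L i) (M l) = u := fun i j l hl => by
    rw [hu, eq_div_iff (by positivity), mul_comm]
    exact (hval _ _ (hne i j)).2.2.1 _ (hne i l).symm (fun h => hl (hMi h))
  have e4 : ∀ i j k l, k ≠ i → l ≠ j → uu D (L i) (M j) (L k) (M l) = v := fun i j k l hk hl => by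
    rw [hv, eq_div_iff (by positivity), mul_comm]
    exact (hval _ _ (hne i j)).2.2.2 _ _ (fun h => hk (hLi h)) (hne k j) (hne i l).symm
      (fun h => hl (hMi h)) (hne k l)
  have s2 : ∀ i j, ∑ k, uu D (L i) (M j) (L k) (M j) = q + (n - 1) * u := by
    intro i j
    rw [← Finset.add_sum_erase _ _ (Finset.mem_univ i), e1,
      Finset.sum_congr rfl (fun k hk => e2 i j k (Finset.ne_of_mem_erase hk)), Finset.sum_const,
      Finset.card_erase_of_mem (Finset.mem_univ i), nsmul_eq_mul]
    simp [Nat.cast_sub (by omega : 1 ≤ n)]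
  have s3 : ∀ i j, ∑ l, uu D (L i) (M j) (L i) (M l) = q + (m - 1) * u := by
    intro i j
    rw [← Finset.add_sum_erase _ _ (Finset.mem_univ j), e1,
      Finset.sum_congr rfl (fun k hk => e3 i j k (Finset.ne_of_mem_erase hk)), Finset.sum_const,
      Finset.card_erase_of_mem (Finset.mem_univ j), nsmul_eq_mul]
    simp [Nat.cast_sub (by omega : 1 ≤ m)]
  have s4 : ∀ i j l, l ≠ j → ∑ k, uu D (L i) (M j) (L k) (M l) = u + (n - 1) * v := by
    intro i j l hl
    rw [← Finset.add_sum_erase _ _ (Finset.mem_univ i), e3 i j l hl,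
      Finset.sum_congr rfl (fun k hk => e4 i j k l (Finset.ne_of_mem_erase hk) hl), Finset.sum_const,
      Finset.card_erase_of_mem (Finset.mem_univ i), nsmul_eq_mul]
    simp [Nat.cast_sub (by omega : 1 ≤ n)]
  have s5 : ∀ i j, ∑ l, ∑ k, uu D (L i) (M j) (L k) (M l) = q + (n - 1) * u + (m - 1) * (u + (n - 1) * v) := by
    intro i j
    rw [← Finset.add_sum_erase _ _ (Finset.mem_univ j), s2,
      Finset.sum_congr rfl (fun l hl => s4 i j l (Finset.ne_of_mem_erase hl)), Finset.sum_const,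
      Finset.card_erase_of_mem (Finset.mem_univ j), nsmul_eq_mul]
    simp [Nat.cast_sub (by omega : 1 ≤ m)]
  have hval2 : RR n m d π = (n - 1) * (m - 1) * (q - 2 * u + v) := by
    rw [hRR]
    unfold QQ
    have c1 : ∀ j, ∑ l, ∑ i, uu D (L i) (M j) (L i) (M l) = ∑ i, ∑ l, uu D (L i) (M j) (L i) (M l) :=
      fun j => Finset.sum_comm
    have c2 : ∀ j, ∑ l, ∑ i, ∑ k, uu D (L i) (M j) (L k) (M l) = ∑ i, ∑ l, ∑ k, uu D (L i) (M j) (L k) (M l) :=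
      fun j => Finset.sum_comm
    simp only [c1, c2, s2, s3, s5, e1]
    simp
    field_simp
    ring
  rw [hval2, hq, hu, hv]
  field_simp
  ring
end decouple

section final
open Equiv

lemma xi_mgf {N : ℕ} (hN : 0 < N) (x : Fin N → Fin N → ℝ) (b s : ℝ) (hb : 0 < b) (hs : 0 < s)
    (hx : ∀ i k, |x i k| ≤ 4 * b) (h0 : ∑ i, ∑ k, x i k = 0) (hsb : s * (320 * b) ≤ 1) :
    av (fun α => Real.exp (s * lin x α)) ≤ Real.exp (20 * s ^ 2 * ((∑ i, ∑ k, x i k ^ 2) / N)) := by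
  have hN' : (0:ℝ) < N := by exact_mod_cast hN
  have hb2 : 0 < b ^ 2 := by positivity
  set r : ℝ := 1 / (10240 * b ^ 2) with hr
  have hr0 : 0 < r := by positivity
  have hrb : r * b ^ 2 = 1 / 10240 := by rw [hr]; field_simp
  have hsr : s ^ 2 ≤ r / 10 := by
    have h1 : (s * (320 * b)) ^ 2 ≤ 1 := pow_le_one₀ (by positivity) hsb
    have h2 : s ^ 2 * (102400 * b ^ 2) ≤ 1 := by nlinarith
    rw [hr, div_div, le_div_iff₀ (by positivity)]
    nlinarith
  have h1 := lin_subgauss hN x r s hr0 hs hsr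
  rw [h0] at h1
  simp only [zero_div, sub_zero] at h1
  refine h1.trans ?_
  rw [Real.exp_le_exp]
  set W := (∑ i, ∑ k, x i k ^ 2) / (N:ℝ) with hW
  have hW0 : 0 ≤ W := by positivity
  have h2 := lin_nonneg_mgf hN (fun i k => x i k ^ 2) (16 * b ^ 2) (8 * r) (fun i k => sq_nonneg _)
    (fun i k => by
      have := hx i k
      have h3 : |x i k| ^ 2 ≤ (4 * b) ^ 2 := pow_le_pow_left₀ (abs_nonneg _) this 2
      rw [sq_abs] at h3
      linarith) (by positivity) (by positivity) (by nlinarith)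
  have h3 : Real.log (av (fun α : Perm (Fin N) => Real.exp (r * (8 * lin (fun i k => x i k ^ 2) α + 8 * W))))
      ≤ 152 / 9 * r * W := by
    rw [Real.log_le_iff_le_exp (av_pos fun _ => Real.exp_pos _)]
    have h4 : ∀ α : Perm (Fin N), Real.exp (r * (8 * lin (fun i k => x i k ^ 2) α + 8 * W)) =
        Real.exp (8 * r * lin (fun i k => x i k ^ 2) α) * Real.exp (8 * r * W) := fun α => by
      rw [← Real.exp_add]; ring_nf
    simp only [h4, av_mul_right]
    calc _ ≤ Real.exp (10 / 9 * (8 * r) * W) * Real.exp (8 * r * W) := by gcongr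
      _ = _ := by rw [← Real.exp_add]; ring_nf
  calc _ ≤ 10 / 9 * (s ^ 2 / r) * (152 / 9 * r * W) := by gcongr
    _ = 1520 / 81 * (s ^ 2 * W) := by field_simp; ring
    _ ≤ 20 * (s ^ 2 * W) := by gcongr; norm_num
    _ = _ := by ring

lemma small_mgf {Ω : Type*} [Fintype Ω] [Nonempty Ω] (f : Ω → ℝ) (c M1 M2 : ℝ)
    (h1 : ∀ ω, |f ω| ≤ M1) (h2 : ∀ ω, |f ω| ≤ M2) (hc : |c| * (2 * M1) ≤ 1) :
    av (fun ω => Real.exp (c * (f ω - av f))) ≤ Real.exp ((|c| * (2 * M2)) ^ 2) := by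
  have key : ∀ M, (∀ ω, |f ω| ≤ M) → ∀ ω, |c * (f ω - av f)| ≤ |c| * (2 * M) := by
    intro M hM ω
    rw [abs_mul]
    gcongr
    have a1 : av f ≤ M := by
      rw [← av_const (Ω := Ω) M]; exact av_mono fun ω => (abs_le.1 (hM ω)).2
    have a2 : -M ≤ av f := by
      rw [← av_const (Ω := Ω) (-M)]; exact av_mono fun ω => (abs_le.1 (hM ω)).1
    have := abs_le.1 (hM ω)
    rw [abs_le]; constructor <;> linarith
  have h3 : ∀ ω, Real.exp (c * (f ω - av f)) ≤ (1 + (|c| * (2 * M2)) ^ 2) + c * (f ω - av f) := by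
    intro ω
    have a1 := key M1 h1 ω
    have a2 := key M2 h2 ω
    have a3 := (abs_le.1 (Real.abs_exp_sub_one_sub_id_le (a1.trans hc))).2
    have a4 : (c * (f ω - av f)) ^ 2 ≤ (|c| * (2 * M2)) ^ 2 := by
      rw [← sq_abs]; exact pow_le_pow_left₀ (abs_nonneg _) a2 2
    linarith
  refine (av_mono h3).trans ?_
  rw [av_add, av_const, av_mul_left, av_sub, av_const, sub_self, mul_zero, add_zero]
  have := Real.add_one_le_exp ((|c| * (2 * M2)) ^ 2)
  linarith

lemma entry_le {N : ℕ} (d : Fin N → Fin N → Fin N → Fin N → ℝ) (b : ℝ) (hb : 0 < b)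
    (Hop : ∀ (σ : Perm (Fin N)) (y : Fin N → ℝ),
      ∑ i, (∑ j, d i j (σ i) (σ j) * y j) ^ 2 ≤ b ^ 2 * ∑ j, y j ^ 2)
    (σ : Perm (Fin N)) (i j : Fin N) : |d i j (σ i) (σ j)| ≤ b := by
  have h := Hop σ (Pi.single j 1)
  have h1 : ∑ i, d i j (σ i) (σ j) ^ 2 ≤ b ^ 2 := by
    simpa [Pi.single_apply] using h
  have h2 : d i j (σ i) (σ j) ^ 2 ≤ b ^ 2 :=
    (Finset.single_le_sum (f := fun i => d i j (σ i) (σ j) ^ 2) (fun i _ => sq_nonneg _)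
      (Finset.mem_univ i)).trans h1
  exact abs_le_of_sq_le_sq h2 hb.le

lemma abs_avg_le {N : ℕ} (hN : 0 < N) (f : Fin N → ℝ) (b : ℝ) (h : ∀ i, |f i| ≤ b) :
    |(∑ i, f i) / (N:ℝ)| ≤ b := by
  have hN' : (0:ℝ) < N := by exact_mod_cast hN
  rw [abs_div, abs_of_pos hN', div_le_iff₀ hN']
  refine (Finset.abs_sum_le_sum_abs _ _).trans ?_
  refine (Finset.sum_le_sum fun i _ => h i).trans ?_
  simp [mul_comm]

lemma three_exp {Ω : Type*} [Fintype Ω] [Nonempty Ω] (x y z : Ω → ℝ) (G : ℝ)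
    (hx : av (fun ω => Real.exp (2 * x ω)) ≤ Real.exp G)
    (hy : av (fun ω => Real.exp (4 * y ω)) ≤ Real.exp G)
    (hz : av (fun ω => Real.exp (4 * z ω)) ≤ Real.exp G) :
    av (fun ω => Real.exp (x ω + y ω + z ω)) ≤ Real.exp G := by
  have h : ∀ ω, Real.exp (x ω + y ω + z ω) ≤ 1 / 2 * Real.exp (2 * x ω) +
      (1 / 4 * Real.exp (4 * y ω) + 1 / 4 * Real.exp (4 * z ω)) := by
    intro ω
    have e1 : Real.exp (x ω + y ω + z ω) = Real.exp (x ω) * Real.exp (y ω + z ω) := by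
      rw [← Real.exp_add]; ring_nf
    have e2 : Real.exp (2 * x ω) = Real.exp (x ω) ^ 2 := by rw [← Real.exp_nat_mul]; norm_num
    have e3 : Real.exp (4 * y ω) = (Real.exp (y ω) ^ 2) ^ 2 := by
      rw [← pow_mul, ← Real.exp_nat_mul]; norm_num
    have e4 : Real.exp (4 * z ω) = (Real.exp (z ω) ^ 2) ^ 2 := by
      rw [← pow_mul, ← Real.exp_nat_mul]; norm_num
    rw [e1, Real.exp_add, e2, e3, e4]
    nlinarith [sq_nonneg (Real.exp (x ω) - Real.exp (y ω) * Real.exp (z ω)),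
      sq_nonneg (Real.exp (y ω) ^ 2 - Real.exp (z ω) ^ 2)]
  refine (av_mono h).trans ?_
  rw [av_add, av_add, av_mul_left, av_mul_left, av_mul_left]
  linarith

lemma arith1 (n m N : ℝ) (hn : 10 ≤ n) (h1 : n ≤ m) (h2 : m ≤ n + 1) (hN : N = n + m) :
    0 < N ^ 2 - 3 * N + 1 ∧ N ^ 2 - 3 * N + 1 ≤ 5 * ((n - 1) * (m - 1)) ∧
    N ^ 2 - N ≤ 6 / 5 * (N ^ 2 - 3 * N + 1) ∧ N ^ 2 ≤ 6 / 5 * (N ^ 2 - 3 * N + 1) ∧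
    N ^ 2 ≤ 5 * (n * m) ∧ 0 < N ^ 2 - N := by
  have hN20 : 20 ≤ N := by linarith
  have h3 : (m - n) ^ 2 ≤ 1 := by
    apply pow_le_one₀ <;> linarith
  have h4 : 20 * N ≤ N ^ 2 := by rw [sq]; exact mul_le_mul_of_nonneg_right hN20 (by linarith)
  have h5 : 4 * (n * m) = N ^ 2 - (m - n) ^ 2 := by rw [hN]; ring
  refine ⟨by linarith, by linarith, by linarith, by linarith, by linarith, by linarith⟩

set_option maxHeartbeats 1000000 in
lemma main_mgf {n m : ℕ} (hn : 10 ≤ n) (hnm : n ≤ m) (hmn : m ≤ n + 1)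
    (d : Fin (n+m) → Fin (n+m) → Fin (n+m) → Fin (n+m) → ℝ)
    (h1 : ∀ i j k, ∑ l, d i j k l = 0) (h2 : ∀ i j l, ∑ k, d i j k l = 0)
    (h3 : ∀ i k l, ∑ j, d i j k l = 0) (h4 : ∀ j k l, ∑ i, d i j k l = 0)
    (b : ℝ) (hb : 0 < b)
    (Hop : ∀ (σ : Perm (Fin (n+m))) (y : Fin (n+m) → ℝ),
      ∑ i, (∑ j, d i j (σ i) (σ j) * y j) ^ 2 ≤ b ^ 2 * ∑ j, y j ^ 2)
    (N : ℝ) (hN : N = n + m)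
    (ξ : Fin (n+m) → Fin (n+m) → ℝ)
    (hξ : ∀ i k, ξ i k = d i i k k - (∑ k', d i i k' k') / N
        - (∑ i', d i' i' k k) / N
        + (∑ i', ∑ k', d i' i' k' k') / N ^ 2)
    (V : ℝ)
    (hV : V = (∑ i, ∑ k, (ξ i k) ^ 2) / N
        + (∑ i, ∑ j, ∑ k, ∑ l, (d i j k l) ^ 2) / N ^ 2)
    (t : ℝ) (ht : 0 < t) (htb : 3200 * b * t ≤ 1) :
    av (fun π : Perm (Fin (n+m)) => Real.exp (t * (∑ i, ∑ j, d i j (π i) (π j)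
      - av (fun π : Perm (Fin (n+m)) => ∑ i, ∑ j, d i j (π i) (π j))))) ≤ Real.exp (45000 * t ^ 2 * V) := by
  have hNc : ((n + m : ℕ) : ℝ) = N := by rw [hN]; push_cast; ring
  have hn0 : 0 < n := by omega
  have hm0 : 0 < m := by omega
  have hN0 : 0 < n + m := by omega
  have hnr : (10:ℝ) ≤ n := by exact_mod_cast hn
  have hnmr : (n:ℝ) ≤ m := by exact_mod_cast hnm
  have hmnr : (m:ℝ) ≤ n + 1 := by exact_mod_cast hmn
  have hN20 : 20 ≤ N := by linarith
  obtain ⟨ar1, ar2, ar3, ar4, ar5, ar6⟩ := arith1 n m N hnr hnmr hmnr hN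
  set Q : Perm (Fin (n+m)) → ℝ := fun π => ∑ i, ∑ j, d i j (π i) (π j) with hQ
  set P : Perm (Fin (n+m)) → ℝ := fun π => ∑ i, ∑ j, d i j (π j) (π i) with hP
  set K : ℝ := ∑ i, ∑ j, d i i j j with hK
  set Δ : Perm (Fin (n+m)) → ℝ := lin (fun i k => d i i k k) with hΔ
  set S : ℝ := ∑ i, ∑ j, ∑ k, ∑ l, (d i j k l) ^ 2 with hS
  set X : ℝ := ∑ i, ∑ k, (ξ i k) ^ 2 with hX
  have hS0 : 0 ≤ S := Finset.sum_nonneg fun _ _ => Finset.sum_nonneg fun _ _ =>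
    Finset.sum_nonneg fun _ _ => Finset.sum_nonneg fun _ _ => sq_nonneg _
  have hX0 : 0 ≤ X := Finset.sum_nonneg fun _ _ => Finset.sum_nonneg fun _ _ => sq_nonneg _
  clear_value S X
  have hV1 : X / N ≤ V := by
    rw [hV]; have : 0 ≤ S / N ^ 2 := by positivity
    linarith
  have hV2 : S ≤ N ^ 2 * V := by
    have : S / N ^ 2 ≤ V := by
      rw [hV]; have : 0 ≤ X / N := by positivity
      linarith
    rwa [div_le_iff₀ (by positivity), mul_comm] at this
  have hV0 : 0 ≤ V := le_trans (by positivity) hV1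
  set w := N ^ 2 - 3 * N + 1 with hw
  clear_value w
  have hw0 : 0 < w := by exact ar1
  set a := ((n:ℝ) - 1) * (m - 1) with ha
  clear_value a
  have ha0 : 0 < a := by rw [ha]; apply mul_pos <;> linarith
  set κ := N * (N - 1) * (N - 2) * (N - 3) / (a * w) with hκ
  set c1 := (N ^ 2 - N) / w with hc1
  set c2 := 1 / w with hc2
  clear_value κ c1 c2
  have hκ0 : 0 < κ := by
    rw [hκ]
    apply div_pos _ (by positivity)
    apply mul_pos (mul_pos (mul_pos _ _) _) _ <;> linarith
  have hwa : w ≤ 5 * a := by exact ar2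
  have hκ5 : κ ≤ 5 := by
    rw [hκ, div_le_iff₀ (by positivity)]
    calc _ = w ^ 2 - 1 := by rw [hw]; ring
      _ ≤ w * w := by linarith [sq w]
      _ ≤ (5 * a) * w := by gcongr
      _ = _ := by ring
  have hc10 : 0 < c1 := by rw [hc1]; exact div_pos ar6 hw0
  have hc1b : c1 ≤ 6 / 5 := by rw [hc1, div_le_iff₀ hw0]; exact ar3
  have hc20 : 0 < c2 := by rw [hc2]; positivity
  have hc2b : c2 * N ^ 2 ≤ 6 / 5 := by
    rw [hc2, div_mul_eq_mul_div, div_le_iff₀ hw0, one_mul]; exact ar4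
  have hid : ∀ π, Q π = κ * RR n m d π - c2 * P π - c2 * K + c1 * Δ π := by
    intro π
    have := RR_id (by omega) (by omega) d h1 h2 h3 h4 π N hN
    rw [← ha, ← hw] at this
    change N * (N - 1) * (N - 2) * (N - 3) * RR n m d π = a * (w * Q π + P π + K - (N ^ 2 - N) * Δ π) at this
    rw [hκ, hc1, hc2]
    field_simp
    linarith
  have hEQ : av Q = - c2 * av P - c2 * K + c1 * av Δ := by
    have : Q = fun π => κ * RR n m d π - c2 * P π - c2 * K + c1 * Δ π := funext hid
    rw [this, av_add, av_sub, av_sub, av_const, av_mul_left, av_mul_left, av_mul_left, RR_mean hn0 hm0]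
    ring
  have hEΔ : av Δ = K / N := by rw [hΔ, av_lin hN0, hNc]
  have hN' : N ≠ 0 := by linarith
  have hξl : ∀ π, lin ξ π = Δ π - av Δ := by
    intro π
    rw [hEΔ, hΔ]
    unfold lin
    simp only [hξ, Finset.sum_add_distrib, Finset.sum_sub_distrib, ← Finset.sum_div]
    rw [Equiv.sum_comp π (fun k => ∑ i', d i' i' k k), Finset.sum_comm (f := fun k i => d i i k k)]
    simp only [Finset.sum_const, Finset.card_univ, Fintype.card_fin, nsmul_eq_mul, hNc]
    change _ - K / N - K / N + N * K / N ^ 2 = _ - K / N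
    field_simp
    ring
  have hξ0 : ∑ i, ∑ k, ξ i k = 0 := by
    have e1 := av_lin hN0 ξ
    have e2 : av (lin ξ) = 0 := by
      rw [funext hξl, av_sub, av_const, sub_self]
    rw [e2, hNc, eq_div_iff hN', zero_mul] at e1
    exact e1.symm
  have hdd : ∀ i k, |d i i k k| ≤ b := by
    intro i k
    have := entry_le d b hb Hop (swap i k) i i
    rwa [swap_apply_left] at this
  have hξb : ∀ i k, |ξ i k| ≤ 4 * b := by
    intro i k
    have a1 := hdd i k
    have a2 := abs_avg_le hN0 (fun k' => d i i k' k') b (fun k' => hdd i k')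
    have a3 := abs_avg_le hN0 (fun i' => d i' i' k k) b (fun i' => hdd i' k)
    have a4 := abs_avg_le hN0 (fun i' => (∑ k', d i' i' k' k') / ((n + m : ℕ) : ℝ)) b
      (fun i' => abs_avg_le hN0 (fun k' => d i' i' k' k') b (fun k' => hdd i' k'))
    rw [← Finset.sum_div, div_div, ← sq] at a4
    rw [hNc] at a2 a3 a4
    rw [hξ]
    rw [abs_le] at a1 a2 a3 a4 ⊢
    constructor <;> linarith [a1.1, a1.2, a2.1, a2.2, a3.1, a3.2, a4.1, a4.2]
  have hPb : ∀ π, |P π| ≤ N ^ 2 * b := by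
    intro π
    have e1 : ∀ i j, |d i j (π j) (π i)| ≤ b := by
      intro i j
      have := entry_le d b hb Hop (π * swap i j) i j
      simpa using this
    have e2 := abs_avg_le hN0 (fun i => (∑ j, d i j (π j) (π i)) / ((n + m : ℕ) : ℝ)) b
      (fun i => abs_avg_le hN0 (fun j => d i j (π j) (π i)) b (e1 i))
    rw [← Finset.sum_div, div_div, ← sq, hNc, abs_div, abs_of_pos (show 0 < N ^ 2 by positivity),
      div_le_iff₀ (by positivity)] at e2
    rw [mul_comm]; exact e2
  have hPV : ∀ π, |P π| ≤ N ^ 2 * Real.sqrt V := by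
    intro π
    apply abs_le_of_sq_le_sq _ (by positivity)
    rw [mul_pow, Real.sq_sqrt hV0]
    have e1 : P π ^ 2 ≤ N * ∑ i, (∑ j, d i j (π j) (π i)) ^ 2 := by
      have := sq_sum_le_card_mul_sum_sq (s := Finset.univ) (f := fun i => ∑ j, d i j (π j) (π i))
      simp only [Finset.card_univ, Fintype.card_fin, hNc] at this
      exact this
    have e2 : ∀ i, (∑ j, d i j (π j) (π i)) ^ 2 ≤ N * ∑ j, d i j (π j) (π i) ^ 2 := by
      intro i
      have := sq_sum_le_card_mul_sum_sq (s := Finset.univ) (f := fun j => d i j (π j) (π i))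
      simp only [Finset.card_univ, Fintype.card_fin, hNc] at this
      exact this
    have e3 : ∑ i, ∑ j, d i j (π j) (π i) ^ 2 ≤ S := by
      rw [hS]
      refine Finset.sum_le_sum fun i _ => Finset.sum_le_sum fun j _ => ?_
      refine le_trans ?_ (Finset.single_le_sum (f := fun k => ∑ l, d i j k l ^ 2)
        (fun k _ => Finset.sum_nonneg fun l _ => sq_nonneg _) (Finset.mem_univ (π j)))
      exact Finset.single_le_sum (f := fun l => d i j (π j) l ^ 2)
        (fun l _ => sq_nonneg _) (Finset.mem_univ (π i))
    calc P π ^ 2 ≤ N * ∑ i, (∑ j, d i j (π j) (π i)) ^ 2 := e1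
      _ ≤ N * ∑ i, N * ∑ j, d i j (π j) (π i) ^ 2 := by
          gcongr with i _; exact e2 i
      _ = N ^ 2 * ∑ i, ∑ j, d i j (π j) (π i) ^ 2 := by rw [← Finset.mul_sum]; ring
      _ ≤ N ^ 2 * (N ^ 2 * V) := by gcongr; exact e3.trans hV2
      _ = _ := by ring
  have hdec : ∀ π, t * (Q π - av Q) = t * κ * RR n m d π + t * c1 * lin ξ π + (-(t * c2)) * (P π - av P) := by
    intro π
    rw [hid π, hEQ, hξl]; ring
  change av (fun π => Real.exp (t * (Q π - av Q))) ≤ _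
  clear_value Q P K Δ
  simp only [hdec]
  apply three_exp
  · have hs : 2 * t * κ ≤ 10 * t := by linarith [mul_le_mul_of_nonneg_left hκ5 ht.le]
    have := RR_mgf hn0 hm0 d b hb Hop (2 * t * κ) (by positivity) (by
      calc _ ≤ 10 * t * (320 * b) := by gcongr
        _ = 3200 * b * t := by ring
        _ ≤ 1 := htb)
    rw [← hS] at this
    refine le_trans (le_of_eq ?_) (this.trans ?_)
    · congr 1; ext π; ring_nf
    · rw [Real.exp_le_exp]
      have hnm5 : S / (n * m) ≤ 5 * V := by
        rw [div_le_iff₀ (by positivity)]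
        calc S ≤ N ^ 2 * V := hV2
          _ ≤ 5 * (n * m) * V := mul_le_mul_of_nonneg_right ar5 hV0
          _ = _ := by ring
      calc 90 * (2 * t * κ) ^ 2 * (S / (n * m)) ≤ 90 * (10 * t) ^ 2 * (5 * V) := by gcongr
        _ = _ := by ring
  · have hs : 4 * t * c1 ≤ 24 / 5 * t := by linarith [mul_le_mul_of_nonneg_left hc1b ht.le]
    have := xi_mgf hN0 ξ b (4 * t * c1) hb (by positivity) hξb hξ0 (by
      calc _ ≤ 24 / 5 * t * (320 * b) := by gcongr
        _ = 1536 * (b * t) := by ring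
        _ ≤ 3200 * b * t := by linarith [mul_pos hb ht]
        _ ≤ 1 := htb)
    refine le_trans (le_of_eq ?_) (this.trans ?_)
    · congr 1; ext π; ring_nf
    · rw [Real.exp_le_exp, hNc, ← hX]
      calc 20 * (4 * t * c1) ^ 2 * (X / N) ≤ 20 * (24 / 5 * t) ^ 2 * V := by gcongr
        _ ≤ _ := by linarith [mul_nonneg (sq_nonneg t) hV0]
  · have habs : |-(4 * t * c2)| = 4 * t * c2 := by rw [abs_neg, abs_of_pos (by positivity)]
    have hbt : 0 < b * t := mul_pos hb ht
    have := small_mgf P (-(4 * t * c2)) (N ^ 2 * b) (N ^ 2 * Real.sqrt V) hPb hPV (by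
      rw [habs]
      calc _ = 8 * (b * t) * (c2 * N ^ 2) := by ring
        _ ≤ 8 * (b * t) * (6 / 5) := by gcongr
        _ ≤ 1 := by linarith)
    refine le_trans (le_of_eq ?_) (this.trans ?_)
    · congr 1; ext π; ring_nf
    · rw [Real.exp_le_exp, habs]
      calc _ = 64 * t ^ 2 * (c2 * N ^ 2) ^ 2 * (Real.sqrt V) ^ 2 := by ring
        _ ≤ 64 * t ^ 2 * (6 / 5) ^ 2 * (Real.sqrt V) ^ 2 := by gcongr
        _ = 64 * t ^ 2 * (6 / 5) ^ 2 * V := by rw [Real.sq_sqrt hV0]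
        _ ≤ _ := by linarith [mul_nonneg (sq_nonneg t) hV0]
end final

lemma opNorm_bound {N : ℕ} (M : Matrix (Fin N) (Fin N) ℝ) (y : Fin N → ℝ) :
    ∑ i, (∑ j, M i j * y j) ^ 2 ≤ opNorm M ^ 2 * ∑ j, y j ^ 2 := by
  have h := (LinearMap.toContinuousLinearMap (Matrix.toEuclideanLin M)).le_opNorm (WithLp.toLp 2 y)
  have h2 := pow_le_pow_left₀ (norm_nonneg _) h 2
  rw [mul_pow, EuclideanSpace.norm_sq_eq, EuclideanSpace.norm_sq_eq] at h2
  simpa [opNorm, Matrix.toLpLin_apply, Matrix.mulVec, dotProduct] using h2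

lemma permExp_eq (N : ℕ) (f : Equiv.Perm (Fin N) → ℝ) : permExp N f = av f := by
  unfold permExp av
  rw [Fintype.card_perm, Fintype.card_fin]

lemma permProb_le (N : ℕ) (f : Equiv.Perm (Fin N) → ℝ) (t u : ℝ) (hu : 0 < u) :
    permProb N (fun σ => f σ ≥ t) ≤ Real.exp (-(u * t)) * av (fun σ => Real.exp (u * f σ)) := by
  rw [← av_mul_left]
  unfold permProb av
  rw [Fintype.card_perm, Fintype.card_fin]
  gcongr
  rw [Finset.card_filter]
  push_cast
  refine Finset.sum_le_sum fun σ _ => ?_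
  split_ifs with h
  · rw [← Real.exp_add]
    have : 0 ≤ u * (f σ - t) := mul_nonneg hu.le (by linarith)
    exact Real.one_le_exp (by linarith)
  · positivity

/-- Tail bound for a degenerate double-indexed permutation statistic. -/
theorem degenerate_dips_tail (N : ℕ) (hN : 20 ≤ N)
    (d : Fin N → Fin N → Fin N → Fin N → ℝ)
    (hdeg1 : ∀ i j k, ∑ l, d i j k l = 0)
    (hdeg2 : ∀ i j l, ∑ k, d i j k l = 0)
    (hdeg3 : ∀ i k l, ∑ j, d i j k l = 0)
    (hdeg4 : ∀ j k l, ∑ i, d i j k l = 0)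
    (hnonzero : ∃ i j k l, d i j k l ≠ 0)
    (B : ℝ)
    (hB : B = Finset.univ.sup' ⟨1, Finset.mem_univ 1⟩
        (fun σ : Equiv.Perm (Fin N) =>
          opNorm (Matrix.of fun i j => d i j (σ i) (σ j))))
    (ξ : Fin N → Fin N → ℝ)
    (hξ : ∀ i k, ξ i k = d i i k k - (∑ k', d i i k' k') / (N : ℝ)
        - (∑ i', d i' i' k k) / (N : ℝ)
        + (∑ i', ∑ k', d i' i' k' k') / (N : ℝ) ^ 2)
    (V : ℝ)
    (hV : V = (∑ i, ∑ k, (ξ i k) ^ 2) / (N : ℝ)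
        + (∑ i, ∑ j, ∑ k, ∑ l, (d i j k l) ^ 2) / (N : ℝ) ^ 2)
    (t : ℝ) (ht : 0 < t) :
    permProb N (fun σ =>
        (∑ i, ∑ j, d i j (σ i) (σ j))
          - permExp N (fun σ' => ∑ i, ∑ j, d i j (σ' i) (σ' j)) ≥ t)
      ≤ Real.exp (-(t ^ 2 / (400000 * V + 10800 * B * t))) := by
  have hNr : (0:ℝ) < N := by exact_mod_cast (by omega : 0 < N)
  have hBσ : ∀ σ : Equiv.Perm (Fin N), opNorm (Matrix.of fun i j => d i j (σ i) (σ j)) ≤ B := by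
    intro σ
    rw [hB]
    exact Finset.le_sup' (fun σ : Equiv.Perm (Fin N) =>
          opNorm (Matrix.of fun i j => d i j (σ i) (σ j))) (Finset.mem_univ σ)
  have hop0 : ∀ M : Matrix (Fin N) (Fin N) ℝ, 0 ≤ opNorm M := fun M => norm_nonneg _
  have hB0 : 0 ≤ B := (hop0 _).trans (hBσ 1)
  have hVpos : 0 < V := by
    obtain ⟨i, j, k, l, h⟩ := hnonzero
    have e1 : d i j k l ^ 2 ≤ ∑ i, ∑ j, ∑ k, ∑ l, (d i j k l) ^ 2 := by
      refine le_trans ?_ (Finset.single_le_sum (f := fun i => ∑ j, ∑ k, ∑ l, d i j k l ^ 2)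
        (fun _ _ => Finset.sum_nonneg fun _ _ => Finset.sum_nonneg fun _ _ => Finset.sum_nonneg
          fun _ _ => sq_nonneg _) (Finset.mem_univ i))
      refine le_trans ?_ (Finset.single_le_sum (f := fun j => ∑ k, ∑ l, d i j k l ^ 2)
        (fun _ _ => Finset.sum_nonneg fun _ _ => Finset.sum_nonneg
          fun _ _ => sq_nonneg _) (Finset.mem_univ j))
      refine le_trans ?_ (Finset.single_le_sum (f := fun k => ∑ l, d i j k l ^ 2)
        (fun _ _ => Finset.sum_nonneg fun _ _ => sq_nonneg _) (Finset.mem_univ k))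
      exact Finset.single_le_sum (f := fun l => d i j k l ^ 2)
        (fun _ _ => sq_nonneg _) (Finset.mem_univ l)
    have e2 : 0 < d i j k l ^ 2 := by positivity
    have e3 : 0 ≤ (∑ i, ∑ k, (ξ i k) ^ 2) / (N : ℝ) :=
      div_nonneg (Finset.sum_nonneg fun _ _ => Finset.sum_nonneg fun _ _ => sq_nonneg _) hNr.le
    have e4 : 0 < (∑ i, ∑ j, ∑ k, ∑ l, (d i j k l) ^ 2) / (N : ℝ) ^ 2 :=
      div_pos (e2.trans_le e1) (by positivity)
    rw [hV]; linarith
  set den := 200000 * V + 5400 * B * t with hden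
  have hden0 : 0 < den := by positivity
  set u := t / den with hu
  have hu0 : 0 < u := by positivity
  set b := 1 / (3200 * u) with hb
  have hb0 : 0 < b := by positivity
  have hbu : 3200 * b * u ≤ 1 := by rw [hb]; apply le_of_eq; field_simp
  have hBb : B ≤ b := by
    rw [hb, le_div_iff₀ (by positivity), hu]
    rw [← mul_assoc, mul_comm B, mul_assoc, mul_div_assoc', mul_div_assoc', div_le_one hden0, hden]
    nlinarith [mul_nonneg hB0 ht.le]
  have Hop : ∀ (σ : Equiv.Perm (Fin N)) (y : Fin N → ℝ),
      ∑ i, (∑ j, d i j (σ i) (σ j) * y j) ^ 2 ≤ b ^ 2 * ∑ j, y j ^ 2 := by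
    intro σ y
    refine (opNorm_bound (Matrix.of fun i j => d i j (σ i) (σ j)) y).trans ?_
    apply mul_le_mul_of_nonneg_right _ (Finset.sum_nonneg fun _ _ => sq_nonneg _)
    exact pow_le_pow_left₀ (hop0 _) ((hBσ σ).trans hBb) 2
  refine (permProb_le N _ t u hu0).trans ?_
  rw [permExp_eq]
  have hmgf : av (fun π : Equiv.Perm (Fin N) => Real.exp (u * (∑ i, ∑ j, d i j (π i) (π j)
      - av (fun π : Equiv.Perm (Fin N) => ∑ i, ∑ j, d i j (π i) (π j))))) ≤ Real.exp (45000 * u ^ 2 * V) := by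
    clear hnonzero hB hBσ hop0
    clear_value b u
    obtain ⟨n, m, rfl, h1, h2, h3⟩ : ∃ n m, N = n + m ∧ 10 ≤ n ∧ n ≤ m ∧ m ≤ n + 1 :=
      ⟨N / 2, N - N / 2, by omega, by omega, by omega, by omega⟩
    exact main_mgf h1 h2 h3 d hdeg1 hdeg2 hdeg3 hdeg4 b hb0 Hop _ (by push_cast; rfl) ξ hξ V hV u hu0 hbu
  calc _ ≤ Real.exp (-(u * t)) * Real.exp (45000 * u ^ 2 * V) := by gcongr
    _ = Real.exp (-(u * t) + 45000 * u ^ 2 * V) := by rw [Real.exp_add]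
    _ ≤ _ := by
      rw [Real.exp_le_exp]
      have e1 : 400000 * V + 10800 * B * t = 2 * den := by rw [hden]; ring
      have e2 : t ^ 2 / (2 * den) = u * t / 2 := by rw [hu]; field_simp
      rw [e1, e2]
      have e3 : u * den = t := by rw [hu]; field_simp
      have e4 : u * (200000 * V) ≤ t := by
        rw [← e3, hden]
        apply mul_le_mul_of_nonneg_left _ hu0.le
        have : 0 ≤ 5400 * B * t := by positivity
        linarith
      have e5 := mul_le_mul_of_nonneg_left e4 hu0.le
      have e6 : 0 < u * t := by positivity
      linarith
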